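/- arXiv:2212.11371 — 2 statements merged into one kernel-verified Lean document; each statement's English description precedes it below -/
import Mathlib

section
/- The intersection of the Markov spectrum M with the open interval (28√213378/4287, (2497149255+2842763√213378)/1258910718) consists of exactly one point, namely √229/5, which is therefore an isolated point of M. Moreover, both endpoints 28√213378/4287 and (2497149255+2842763√213378)/1258910718 belong to M. -/
open Filter Set MeasureTheory
open scoped ENNReal

/-- Finite continued fraction `[a 0; a 1, ..., a n]`. -/
noncomputable def cfConv : (ℕ → ℝ) → ℕ → ℝ
  | a, 0 => a 0
  | a, n + 1 => a 0 + 1 / cfConv (fun i => a (i + 1)) n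

/-- Value of the infinite continued fraction `[a 0; a 1, a 2, ...]`,
as the limit of its convergents. -/
noncomputable def cfVal (a : ℕ → ℝ) : ℝ := limUnder atTop (cfConv a)

/-- `λ_k(α) = [α_k; α_{k+1}, ...] + [0; α_{k-1}, α_{k-2}, ...]`. -/
noncomputable def lambdaVal (α : ℤ → ℕ) (k : ℤ) : ℝ :=
  cfVal (fun n => (α (k + n) : ℝ)) +
  cfVal (fun n => if n = 0 then 0 else (α (k - n) : ℝ))

/-- The Markov value `m(α) = sup_{k ∈ ℤ} λ_k(α)`. -/
noncomputable def markovValue (α : ℤ → ℕ) : ℝ := ⨆ k : ℤ, lambdaVal α k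

/-- The Markov spectrum. -/
def markovSpectrum : Set ℝ :=
  { x | ∃ α : ℤ → ℕ, (∀ n, 0 < α n) ∧ BddAbove (range (lambdaVal α)) ∧
      markovValue α = x }

/-- The dimension function `d(t) = dim_H (M ∩ (-∞, t))`. -/
noncomputable def dimFun (t : ℝ) : ℝ≥0∞ := dimH (markovSpectrum ∩ Iio t)

/-!
A sequence whose Markov value is below the right endpoint has only the digits `1` and `2`, and none
of its windows forces a value `λ` beyond that endpoint. If moreover `λ_k` exceeds the left endpoint
at some `k`, extending the window around `k` digit by digit leaves, up to reflection, three
possibilities.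

* `… 1 2 2 1 1 1 [2] 2 1 1 …`: among the tails of admissible sequences starting with `1`, the purely
  periodic tail of `1² 2³ 1² 2² 1³ 2²` has the largest value, since a deviation from it that
  increases the value would create a large `λ`. Hence `λ_k` is at most the left endpoint, which is
  the value obtained when both tails are extremal.
* `… 2⁴ 1⁴ | 2⁴ 1⁴ …`, split before the central digit: the window determines its neighbours, so the
  sequence is periodic with period `2⁴ 1⁴` and has Markov value `√229 / 5`.
* The central block of the symmetric sequence realising the right endpoint: after a reflection the
  right tail is the smaller one. Replacing the left tail by the right one does not increase `λ_k`,
  and then enlarging both to the extremal tail does not either. The result is the right endpoint,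
  so `λ_k` is no smaller.
-/

namespace MarkovGap

section ContinuedFraction

variable {a : ℕ → ℝ}

lemma one_le_cfConv (ha : ∀ n, 1 ≤ a n) (n : ℕ) : 1 ≤ cfConv a n := by
  induction n generalizing a with
  | zero => exact ha 0
  | succ n ih =>
    have htail : 1 ≤ cfConv (fun i => a (i + 1)) n := ih fun i => ha _
    rw [cfConv]
    exact le_add_of_le_of_nonneg (ha 0) (by positivity)

lemma cfConv_mem_Icc (ha : ∀ n, 1 ≤ a n) (n : ℕ) : cfConv a n ∈ Icc (a 0) (a 0 + 1) := by
  cases n with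
  | zero => simp [cfConv]
  | succ n =>
    have htail : 1 ≤ cfConv (fun i => a (i + 1)) n := one_le_cfConv (fun i => ha _) n
    rw [cfConv, one_div]
    exact ⟨le_add_of_nonneg_right (by positivity), by gcongr; exact inv_le_one_of_one_le₀ htail⟩

lemma abs_inv_add_inv_sub_le {b x y : ℝ} (hb : 1 ≤ b) (hx : 1 ≤ x) (hy : 1 ≤ y) :
    |(b + x⁻¹)⁻¹ - (b + y⁻¹)⁻¹| ≤ 1 / 4 * |x - y| := by
  have hbx : 1 ≤ b * x := one_le_mul_of_one_le_of_one_le hb hx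
  have hby : 1 ≤ b * y := one_le_mul_of_one_le_of_one_le hb hy
  have hdiff : (b + x⁻¹)⁻¹ - (b + y⁻¹)⁻¹ = 1 / ((b * x + 1) * (b * y + 1)) * (x - y) := by
    field_simp
    ring
  have hdenom : 4 ≤ (b * x + 1) * (b * y + 1) := by nlinarith
  rw [hdiff, abs_mul, abs_of_pos (by positivity)]
  gcongr

lemma abs_cfConv_sub_le (ha : ∀ n, 1 ≤ a n) (N i j : ℕ) :
    |cfConv a (i + 2 * N) - cfConv a (j + 2 * N)| ≤ (1 / 4) ^ N := by
  induction N generalizing a with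
  | zero =>
    simpa using abs_sub_le_of_le_of_le (cfConv_mem_Icc ha i).1 (cfConv_mem_Icc ha i).2
      (cfConv_mem_Icc ha j).1 (cfConv_mem_Icc ha j).2
  | succ N ih =>
    have htail (m : ℕ) : 1 ≤ cfConv (fun n => a (n + 1 + 1)) m := one_le_cfConv (fun n => ha _) m
    have hindex (i : ℕ) : i + 2 * (N + 1) = i + 2 * N + 1 + 1 := by ring
    rw [hindex, hindex, pow_succ']
    simp only [cfConv, add_sub_add_left_eq_sub]
    rw [one_div (_ + _), one_div (_ + _), one_div (cfConv _ _), one_div (cfConv _ _)]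
    exact (abs_inv_add_inv_sub_le (ha 1) (htail _) (htail _)).trans
      (by gcongr; exact ih fun n => ha _)

lemma tendsto_cfConv (ha : ∀ n, 1 ≤ a n) : Tendsto (cfConv a) atTop (nhds (cfVal a)) := by
  refine tendsto_nhds_limUnder (cauchySeq_tendsto_of_complete
    (Metric.cauchySeq_iff.2 fun ε hε => ?_))
  obtain ⟨N, hN⟩ := exists_pow_lt_of_lt_one hε (show (1 / 4 : ℝ) < 1 by norm_num)
  refine ⟨2 * N, fun m hm n hn => ?_⟩
  have hclose := abs_cfConv_sub_le ha N (m - 2 * N) (n - 2 * N)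
  rw [Nat.sub_add_cancel hm, Nat.sub_add_cancel hn] at hclose
  exact hclose.trans_lt hN

lemma one_le_cfVal (ha : ∀ n, 1 ≤ a n) : 1 ≤ cfVal a :=
  ge_of_tendsto' (tendsto_cfConv ha) (one_le_cfConv ha)

lemma cfVal_eq_add_inv (ha : ∀ n, 1 ≤ a (n + 1)) :
    cfVal a = a 0 + (cfVal fun n => a (n + 1))⁻¹ := by
  have htail : cfVal (fun n => a (n + 1)) ≠ 0 := (zero_lt_one.trans_le (one_le_cfVal ha)).ne'
  have hlim : Tendsto (fun n => cfConv a (n + 1)) atTop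
      (nhds (a 0 + (cfVal fun n => a (n + 1))⁻¹)) := by
    simp only [cfConv, one_div]
    exact ((tendsto_cfConv ha).inv₀ htail).const_add _
  exact ((tendsto_add_atTop_iff_nat 1).1 hlim).limUnder_eq

/-- The continued fraction `[s₀; s₁, s₂, …]` of a stream of natural numbers. The one-sided halves
of a bi-infinite sequence are encoded as streams, so that the library's `take`, `drop` and `++ₛ`
describe their finite prefixes. -/
noncomputable def contFrac (s : Stream' ℕ) : ℝ := cfVal fun n => (s.get n : ℝ)

variable {s t : Stream' ℕ}

lemma one_le_contFrac (hs : ∀ n, 0 < s.get n) : 1 ≤ contFrac s :=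
  one_le_cfVal fun n => by exact_mod_cast hs n

lemma contFrac_pos (hs : ∀ n, 0 < s.get n) : 0 < contFrac s :=
  zero_lt_one.trans_le (one_le_contFrac hs)

lemma contFrac_eq_head_add_inv (hs : ∀ n, 0 < s.get n) :
    contFrac s = s.head + (contFrac s.tail)⁻¹ :=
  cfVal_eq_add_inv fun n => by exact_mod_cast hs (n + 1)

lemma inv_contFrac_mem_Icc (hs : ∀ n, 0 < s.get n) : (contFrac s)⁻¹ ∈ Icc (0 : ℝ) 1 :=
  ⟨inv_nonneg.2 (contFrac_pos hs).le, inv_le_one_of_one_le₀ (one_le_contFrac hs)⟩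

lemma contFrac_le_of_head_lt (hs : ∀ n, 0 < s.get n) (ht : ∀ n, 0 < t.get n)
    (hlt : s.head < t.head) : contFrac s ≤ contFrac t :=
  calc contFrac s = s.head + (contFrac s.tail)⁻¹ := contFrac_eq_head_add_inv hs
    _ ≤ s.head + 1 := by gcongr; exact (inv_contFrac_mem_Icc fun n => hs (n + 1)).2
    _ ≤ t.head := by exact_mod_cast hlt
    _ ≤ t.head + (contFrac t.tail)⁻¹ :=
        le_add_of_nonneg_right (inv_contFrac_mem_Icc fun n => ht (n + 1)).1
    _ = contFrac t := (contFrac_eq_head_add_inv ht).symm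

lemma contFrac_le_of_first_diff (hs : ∀ n, 0 < s.get n) (ht : ∀ n, 0 < t.get n) {n : ℕ}
    (heq : ∀ i < n, s.get i = t.get i)
    (hdiff : Even n ∧ s.get n < t.get n ∨ Odd n ∧ t.get n < s.get n) :
    contFrac s ≤ contFrac t := by
  induction n generalizing s t with
  | zero => exact contFrac_le_of_head_lt hs ht (by simpa using hdiff)
  | succ n ih =>
    simp only [Nat.even_add_one, Nat.odd_add_one, Nat.not_even_iff_odd,
      Nat.not_odd_iff_even] at hdiff
    have htail : contFrac t.tail ≤ contFrac s.tail :=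
      ih (fun i => ht _) (fun i => hs _) (fun i hi => (heq (i + 1) (by omega)).symm) hdiff.symm
    have hpos := contFrac_pos fun n => ht (n + 1)
    have hhead : s.head = t.head := heq 0 n.succ_pos
    rw [contFrac_eq_head_add_inv hs, contFrac_eq_head_add_inv ht, hhead]
    gcongr

lemma contFrac_le_contFrac (hs : ∀ n, 0 < s.get n) (ht : ∀ n, 0 < t.get n)
    (h : ∀ n, (∀ i < n, s.get i = t.get i) →
      ¬(Even n ∧ t.get n < s.get n ∨ Odd n ∧ s.get n < t.get n)) :
    contFrac s ≤ contFrac t := by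
  classical
  by_cases hst : ∃ n, s.get n ≠ t.get n
  · have hfirst := fun i hi => not_not.1 (Nat.find_min hst (m := i) hi)
    have hne := Nat.find_spec hst
    refine contFrac_le_of_first_diff hs ht hfirst ?_
    have hnot := h _ hfirst
    rcases Nat.even_or_odd (Nat.find hst) with hpar | hpar
    · exact .inl ⟨hpar, by grind⟩
    · exact .inr ⟨hpar, by grind⟩
  · push Not at hst
    rw [Stream'.ext hst]

end ContinuedFraction

section Word

/-- The value `[w₀; w₁, …, wₙ₋₁, x]` of a finite word of partial quotients completed by a real
number `x`. -/
noncomputable def wordEval (w : List ℕ) (x : ℝ) : ℝ := w.foldr (fun (d : ℕ) (y : ℝ) => d + y⁻¹) x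

/-- The continuant matrix of a word `w`: its entries are the coefficients of the Möbius map
`x ↦ [w, x]`. -/
def continuants (w : List ℕ) : Matrix (Fin 2) (Fin 2) ℕ := (w.map fun d => !![d, 1; 1, 0]).prod

/-- Rational bounds for `[0; w, x]` over all `x ∈ [1, ∞]`. Prepending a digit reverses the order,
so the two bounds swap at each step. -/
def tailBounds (w : List ℕ) : ℚ × ℚ :=
  w.foldr (fun (d : ℕ) (I : ℚ × ℚ) => ((d + I.2)⁻¹, (d + I.1)⁻¹)) (0, 1)

variable {s : Stream' ℕ} {w : List ℕ} {x y : ℝ}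

lemma contFrac_eq_wordEval (hs : ∀ n, 0 < s.get n) (n : ℕ) :
    contFrac s = wordEval (s.take n) (contFrac (s.drop n)) := by
  induction n generalizing s with
  | zero => rfl
  | succ n ih =>
    rw [contFrac_eq_head_add_inv hs, ih (s := s.tail) fun n => hs (n + 1)]
    rfl

lemma wordEval_pos (hx : 0 < x) : 0 < wordEval w x := by
  induction w with
  | nil => exact hx
  | cons d w ih => exact add_pos_of_nonneg_of_pos d.cast_nonneg (inv_pos.2 ih)

lemma wordEval_le_wordEval (hx : 0 < x) (hxy : x ≤ y) :
    (Even w.length → wordEval w x ≤ wordEval w y) ∧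
      (Odd w.length → wordEval w y ≤ wordEval w x) := by
  induction w with
  | nil => simpa [wordEval] using hxy
  | cons d w ih =>
    have hposx : 0 < wordEval w x := wordEval_pos hx
    have hposy : 0 < wordEval w y := wordEval_pos (hx.trans_le hxy)
    rw [List.length_cons, Nat.even_add_one, Nat.odd_add_one, Nat.not_even_iff_odd,
      Nat.not_odd_iff_even]
    exact ⟨fun hodd => add_le_add_right (inv_anti₀ hposy (ih.2 hodd)) _,
      fun heven => add_le_add_right (inv_anti₀ hposx (ih.1 heven)) _⟩

lemma continuants_cons (d : ℕ) (w : List ℕ) :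
    continuants (d :: w) = !![d * continuants w 0 0 + continuants w 1 0,
      d * continuants w 0 1 + continuants w 1 1; continuants w 0 0, continuants w 0 1] := by
  have hmul : continuants (d :: w) = !![d, 1; 1, 0] * continuants w := rfl
  ext i j
  fin_cases i <;> fin_cases j <;> simp [hmul, Matrix.mul_apply, Fin.sum_univ_two]

lemma continuants_mul_add_pos (w : List ℕ) (hx : 0 < x) :
    0 < continuants w 0 0 * x + continuants w 0 1 ∧
      0 < continuants w 1 0 * x + continuants w 1 1 := by
  induction w with
  | nil => simpa [continuants] using hx
  | cons d w ih =>
    simp only [continuants_cons, Matrix.of_apply, Matrix.cons_val', Matrix.cons_val_zero,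
      Matrix.cons_val_one, Matrix.cons_val_fin_one, Nat.cast_add, Nat.cast_mul]
    exact ⟨by nlinarith [mul_nonneg d.cast_nonneg ih.1.le], ih.1⟩

lemma wordEval_eq_continuants_div (w : List ℕ) (hx : 0 < x) :
    wordEval w x = (continuants w 0 0 * x + continuants w 0 1) /
      (continuants w 1 0 * x + continuants w 1 1) := by
  induction w with
  | nil => simp [wordEval, continuants]
  | cons d w ih =>
    obtain ⟨hnum, hden⟩ := continuants_mul_add_pos w hx
    have hcons : wordEval (d :: w) x = d + (wordEval w x)⁻¹ := rfl
    simp only [hcons, ih, continuants_cons, Matrix.of_apply, Matrix.cons_val',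
      Matrix.cons_val_zero, Matrix.cons_val_one, Matrix.cons_val_fin_one, Nat.cast_add,
      Nat.cast_mul]
    field_simp [hnum.ne', hden.ne']
    ring

lemma wordEval_eq_div (hx : 0 < x) {p q r s : ℕ} (hw : continuants w = !![p, q; r, s]) :
    wordEval w x = (p * x + q) / (r * x + s) := by
  simp [wordEval_eq_continuants_div w hx, hw]

lemma tailBounds_nonneg (w : List ℕ) : 0 ≤ (tailBounds w).1 ∧ 0 ≤ (tailBounds w).2 := by
  induction w with
  | nil => simp [tailBounds]
  | cons d w ih =>
    exact ⟨inv_nonneg.2 (add_nonneg d.cast_nonneg ih.2),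
      inv_nonneg.2 (add_nonneg d.cast_nonneg ih.1)⟩

lemma inv_contFrac_mem_Icc_tailBounds (hs : ∀ n, 0 < s.get n) (n : ℕ) :
    (contFrac s)⁻¹ ∈ Icc ((tailBounds (s.take n)).1 : ℝ) (tailBounds (s.take n)).2 := by
  induction n generalizing s with
  | zero => simpa [tailBounds] using inv_contFrac_mem_Icc hs
  | succ n ih =>
    have htail := ih (s := s.tail) fun n => hs (n + 1)
    have hhead : (0 : ℝ) < s.head := by exact_mod_cast hs 0
    have hlo : (0 : ℝ) ≤ (tailBounds (s.tail.take n)).1 := by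
      exact_mod_cast (tailBounds_nonneg _).1
    have hcons : tailBounds (s.take (n + 1)) = ((s.head + (tailBounds (s.tail.take n)).2)⁻¹,
        (s.head + (tailBounds (s.tail.take n)).1)⁻¹) := rfl
    rw [contFrac_eq_head_add_inv hs, hcons]
    push_cast
    exact ⟨inv_anti₀ (by linarith [htail.1]) (by linarith [htail.2]),
      inv_anti₀ (by linarith) (by linarith [htail.1])⟩

end Word

section BiInfinite

/-- The half `α_k, α_{k+1}, …` of a bi-infinite sequence. -/
def right (α : ℤ → ℕ) (k : ℤ) : Stream' ℕ := fun n => α (k + n)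

/-- The half `α_{k-1}, α_{k-2}, …` of a bi-infinite sequence, read away from `k`. -/
def left (α : ℤ → ℕ) (k : ℤ) : Stream' ℕ := fun n => α (k - 1 - n)

/-- The mirror image of a bi-infinite sequence that exchanges the indices `n` and `c - n`. -/
def reflect (c : ℤ) (α : ℤ → ℕ) : ℤ → ℕ := fun n => α (c - n)

variable {α : ℤ → ℕ}

@[simp] lemma get_right (α : ℤ → ℕ) (k : ℤ) (n : ℕ) : (right α k).get n = α (k + n) := rfl

@[simp] lemma get_left (α : ℤ → ℕ) (k : ℤ) (n : ℕ) : (left α k).get n = α (k - 1 - n) := rfl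

lemma drop_right (α : ℤ → ℕ) (k : ℤ) (n : ℕ) : (right α k).drop n = right α (k + n) :=
  Stream'.ext fun i => congrArg α (by push_cast; ring)

lemma drop_left (α : ℤ → ℕ) (k : ℤ) (n : ℕ) : (left α k).drop n = left α (k - n) :=
  Stream'.ext fun i => congrArg α (by push_cast; ring)

lemma right_eq_cons (α : ℤ → ℕ) (k : ℤ) : right α k = Stream'.cons (α k) (right α (k + 1)) := by
  ext (_ | n)
  · exact congrArg α (add_zero k)
  · exact congrArg α (by push_cast; ring)

lemma left_add_one_eq_cons (α : ℤ → ℕ) (k : ℤ) :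
    left α (k + 1) = Stream'.cons (α k) (left α k) := by
  ext (_ | n)
  · exact congrArg α (by simp)
  · exact congrArg α (by push_cast; ring)

lemma right_reflect (c k : ℤ) (α : ℤ → ℕ) : right (reflect c α) k = left α (c + 1 - k) :=
  Stream'.ext fun n => congrArg α (by ring)

lemma left_reflect (c k : ℤ) (α : ℤ → ℕ) : left (reflect c α) k = right α (c + 1 - k) :=
  Stream'.ext fun n => congrArg α (by ring)

lemma take_left_eq_take_left {β : ℤ → ℕ} {p q : ℤ} {m n : ℕ}
    (h : ∀ i < n, (right α p).get i = (right β q).get i) (hmn : m ≤ n) :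
    (left α (p + n)).take m = (left β (q + n)).take m := by
  refine List.ext_getElem (by simp) fun i hi _ => ?_
  rw [Stream'.length_take] at hi
  have hdigit : α (p + (n - 1 - i : ℕ)) = β (q + (n - 1 - i : ℕ)) := h _ (by omega)
  rw [Stream'.take_get, Stream'.take_get, get_left, get_left]
  convert hdigit using 2 <;> omega

lemma lambdaVal_eq (hα : ∀ n, 0 < α n) (k : ℤ) :
    lambdaVal α k = contFrac (right α k) + (contFrac (left α k))⁻¹ := by
  have hleft : cfVal (fun n => if n = 0 then 0 else (α (k - n) : ℝ)) =
      (contFrac (left α k))⁻¹ := by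
    rw [cfVal_eq_add_inv fun n => by simpa using Nat.one_le_iff_ne_zero.2 (hα _).ne']
    simp [contFrac, sub_sub, add_comm]
  rw [lambdaVal, hleft]
  rfl

lemma lambdaVal_eq_head_add (hα : ∀ n, 0 < α n) (k : ℤ) :
    lambdaVal α k = α k + (contFrac (right α (k + 1)))⁻¹ + (contFrac (left α k))⁻¹ := by
  rw [lambdaVal_eq hα, contFrac_eq_head_add_inv (s := right α k) fun n => hα _, right_eq_cons α k]
  rfl

lemma digit_lt_lambdaVal (hα : ∀ n, 0 < α n) (k : ℤ) : α k < lambdaVal α k := by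
  have hright : 0 < contFrac (right α (k + 1)) := contFrac_pos fun n => hα _
  have hleft : 0 < contFrac (left α k) := contFrac_pos fun n => hα _
  rw [lambdaVal_eq_head_add hα, add_assoc]
  exact lt_add_of_pos_right _ (by positivity)

lemma lambdaVal_reflect (hα : ∀ n, 0 < α n) (c k : ℤ) :
    lambdaVal (reflect c α) k = lambdaVal α (c - k) := by
  have hk : c + 1 - k = c - k + 1 := by ring
  have hk' : c + 1 - (k + 1) = c - k := by ring
  rw [lambdaVal_eq_head_add (α := reflect c α) fun n => hα _, lambdaVal_eq_head_add hα,
    right_reflect, left_reflect, hk, hk', add_right_comm]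
  rfl

lemma range_lambdaVal_reflect (hα : ∀ n, 0 < α n) (c : ℤ) :
    range (lambdaVal (reflect c α)) = range (lambdaVal α) := by
  rw [funext (lambdaVal_reflect hα c)]
  exact (Equiv.subLeft c).surjective.range_comp (lambdaVal α)

lemma markovValue_reflect (hα : ∀ n, 0 < α n) (c : ℤ) :
    markovValue (reflect c α) = markovValue α :=
  congrArg sSup (range_lambdaVal_reflect hα c)

lemma lambdaVal_comp_add (α : ℤ → ℕ) (c k : ℤ) :
    lambdaVal (fun n => α (n + c)) k = lambdaVal α (k + c) := by
  simp only [lambdaVal, add_right_comm _ _ c, sub_add_eq_add_sub]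

lemma markovValue_comp_add (α : ℤ → ℕ) (c : ℤ) :
    markovValue (fun n => α (n + c)) = markovValue α := by
  unfold markovValue
  simp only [lambdaVal_comp_add]
  exact (Equiv.addRight c).surjective.iSup_comp (lambdaVal α)

lemma periodic_lambdaVal {p : ℤ} (hα : Function.Periodic α p) :
    Function.Periodic (lambdaVal α) p := fun k => by
  rw [← lambdaVal_comp_add, funext hα]

lemma markovValue_eq_of_isGreatest {x : ℝ} (hx : IsGreatest (range (lambdaVal α)) x) :
    markovValue α = x :=
  hx.csSup_eq

lemma mem_markovSpectrum_of_isGreatest {x : ℝ} (hα : ∀ n, 0 < α n)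
    (hx : IsGreatest (range (lambdaVal α)) x) : x ∈ markovSpectrum :=
  ⟨α, hα, hx.bddAbove, markovValue_eq_of_isGreatest hx⟩

end BiInfinite

section Search

variable {α : ℤ → ℕ} {k : ℤ} {L R : List ℕ}

/-- The bi-infinite sequence `α` reads `R` from the index `k` rightwards and `L` from the index
`k - 1` leftwards; thus `L` is written in reverse order, as in `λ_k`. -/
def Reads (α : ℤ → ℕ) (k : ℤ) (L R : List ℕ) : Prop :=
  (left α k).take L.length = L ∧ (right α k).take R.length = R

lemma reads_take (α : ℤ → ℕ) (k : ℤ) (m n : ℕ) :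
    Reads α k ((left α k).take m) ((right α k).take n) := by
  simp [Reads]

lemma reads_cons_iff {d : ℕ} : Reads α k L (d :: R) ↔ Reads α (k + 1) (d :: L) R := by
  simp only [Reads, left_add_one_eq_cons, right_eq_cons α k, List.length_cons,
    Stream'.take_succ_cons, List.cons.injEq]
  tauto

lemma reads_append_iff (w : List ℕ) :
    Reads α k L (w ++ R) ↔ Reads α (k + w.length) (w.reverse ++ L) R := by
  induction w generalizing k L with
  | nil => simp
  | cons d w ih =>
    rw [List.cons_append, reads_cons_iff, ih, List.reverse_cons, List.append_assoc,
      List.singleton_append, List.length_cons, Nat.cast_succ, add_right_comm, ← add_assoc]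

lemma Reads.mono {L' R' : List ℕ} (h : Reads α k L' R') (hL : L <+: L') (hR : R <+: R') :
    Reads α k L R := by
  have htake {s : Stream' ℕ} {w w' : List ℕ} (hw' : s.take w'.length = w') (hw : w <+: w') :
      s.take w.length = w := by
    rw [List.prefix_iff_eq_take.1 hw, ← hw', Stream'.take_take, Stream'.length_take]
  exact ⟨htake h.1 hL, htake h.2 hR⟩

lemma Reads.reflect (h : Reads α k L R) (c : ℤ) : Reads (reflect c α) (c + 1 - k) R L := by
  rwa [Reads, left_reflect, right_reflect, sub_sub_cancel, and_comm]

lemma Reads.left_digit (h : Reads α k L R) (i : ℕ) (hi : i < L.length) :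
    α (k - 1 - i) = L[i] := by
  have hdigit := Stream'.getElem?_take (s := left α k) hi
  rw [h.1, List.getElem?_eq_getElem hi] at hdigit
  exact (Option.some.inj hdigit).symm

lemma Reads.right_digit (h : Reads α k L R) (i : ℕ) (hi : i < R.length) :
    α (k + i) = R[i] := by
  have hdigit := Stream'.getElem?_take (s := right α k) hi
  rw [h.2, List.getElem?_eq_getElem hi] at hdigit
  exact (Option.some.inj hdigit).symm

lemma Reads.append_digits (h : Reads α k L R) :
    Reads α k (L ++ [(left α k).get L.length]) (R ++ [(right α k).get R.length]) := by
  constructor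
  · rw [List.length_append, List.length_singleton, Stream'.take_succ', h.1]
  · rw [List.length_append, List.length_singleton, Stream'.take_succ', h.2]

lemma lambdaVal_eq_wordEval (hα : ∀ n, 0 < α n) (h : Reads α k L R) :
    lambdaVal α k = wordEval R (contFrac (right α (k + R.length))) +
      (wordEval L (contFrac (left α (k - L.length))))⁻¹ := by
  rw [lambdaVal_eq hα, contFrac_eq_wordEval (s := right α k) (fun n => hα _) R.length,
    contFrac_eq_wordEval (s := left α k) (fun n => hα _) L.length, h.1, h.2, drop_right, drop_left]

/-- Rational bounds for `λ_k` of a sequence that reads `L` and `d :: R` at `k`. -/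
def lambdaBounds (L : List ℕ) (d : ℕ) (R : List ℕ) : ℚ × ℚ :=
  (d + (tailBounds R).1 + (tailBounds L).1, d + (tailBounds R).2 + (tailBounds L).2)

lemma lambdaVal_mem_Icc (hα : ∀ n, 0 < α n) {d : ℕ} (h : Reads α k L (d :: R)) :
    lambdaVal α k ∈ Icc ((lambdaBounds L d R).1 : ℝ) (lambdaBounds L d R).2 := by
  have hdigit : Reads α (k + 1) (d :: L) R := reads_cons_iff.1 h
  have hk : α (k + (0 : ℕ)) = d := h.right_digit 0 (Nat.succ_pos _)
  rw [Nat.cast_zero, add_zero] at hk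
  have hright := inv_contFrac_mem_Icc_tailBounds (s := right α (k + 1)) (fun n => hα _) R.length
  have hleft := inv_contFrac_mem_Icc_tailBounds (s := left α k) (fun n => hα _) L.length
  rw [hdigit.2] at hright
  rw [h.1] at hleft
  rw [lambdaVal_eq_head_add hα, hk]
  simp only [lambdaBounds, Rat.cast_add, Rat.cast_natCast]
  exact ⟨add_le_add (add_le_add_right hright.1 _) hleft.1,
    add_le_add (add_le_add_right hright.2 _) hleft.2⟩

/-- Whether `λ ≥ t` is certified at some position of `R`, given the digits `L` read leftwards
before it. -/
def hasPeak (t : ℚ) : List ℕ → List ℕ → Bool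
  | _, [] => false
  | L, d :: R => decide (t ≤ (lambdaBounds L d R).1) || hasPeak t (d :: L) R

lemma exists_le_lambdaVal_of_hasPeak (hα : ∀ n, 0 < α n) {t : ℚ} (h : Reads α k L R)
    (hpeak : hasPeak t L R) : ∃ j, t ≤ lambdaVal α j := by
  induction R generalizing k L with
  | nil => cases hpeak
  | cons d R ih =>
    rw [hasPeak, Bool.or_eq_true, decide_eq_true_iff] at hpeak
    rcases hpeak with hhere | hlater
    · exact ⟨k, (Rat.cast_le.2 hhere).trans (lambdaVal_mem_Icc hα h).1⟩
    · exact ih (reads_cons_iff.1 h) hlater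

/-- Whether `λ ≤ c` is certified at the central position. -/
def centreLE (c : ℚ) (L : List ℕ) : List ℕ → Bool
  | [] => false
  | d :: R => decide ((lambdaBounds L d R).2 ≤ c)

lemma lambdaVal_le_of_centreLE (hα : ∀ n, 0 < α n) {c : ℚ} (h : Reads α k L R)
    (hc : centreLE c L R) : lambdaVal α k ≤ c := by
  cases R with
  | nil => cases hc
  | cons d R => exact (lambdaVal_mem_Icc hα h).2.trans (Rat.cast_le.2 (of_decide_eq_true hc))

/-- The stopping rule of the searches: the window contains a certified `λ ≥ t`, or it forces
`λ ≤ c` at its centre, or it extends one of the patterns in `P`. -/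
def isSettled (t c : ℚ) (P : List (List ℕ × List ℕ)) (L R : List ℕ) : Bool :=
  hasPeak t [] (L.reverse ++ R) || centreLE c L R ||
    P.any fun p => p.1.isPrefixOf L && p.2.isPrefixOf R

/-- Whether every chain of extensions of the window `(L, R)` by one digit from `A` on each side
meets the stopping rule after at most `n` steps. -/
def search (A : List ℕ) (accept : List ℕ → List ℕ → Bool) : ℕ → List ℕ → List ℕ → Bool
  | 0, L, R => accept L R
  | n + 1, L, R =>
      accept L R || A.all fun a => A.all fun b => search A accept n (L ++ [a]) (R ++ [b])

lemma exists_reads_of_search {A : List ℕ} {accept : List ℕ → List ℕ → Bool} {n : ℕ}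
    (hα : ∀ m, α m ∈ A) (h : Reads α k L R) (hsearch : search A accept n L R) :
    ∃ L' R', Reads α k L' R' ∧ accept L' R' := by
  induction n generalizing L R with
  | zero => exact ⟨L, R, h, hsearch⟩
  | succ n ih =>
    rw [search, Bool.or_eq_true] at hsearch
    rcases hsearch with haccept | hext
    · exact ⟨L, R, h, haccept⟩
    · exact ih h.append_digits (List.all_eq_true.1 (List.all_eq_true.1 hext _ (hα _)) _ (hα _))

lemma exists_pattern_of_search {A : List ℕ} {t c : ℚ} {P : List (List ℕ × List ℕ)} {n : ℕ}
    (hpos : ∀ m, 0 < α m) (hα : ∀ m, α m ∈ A) (ht : ∀ j, lambdaVal α j < t)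
    (hc : c < lambdaVal α k) (h : Reads α k L R) (hsearch : search A (isSettled t c P) n L R) :
    ∃ p ∈ P, Reads α k p.1 p.2 := by
  obtain ⟨L', R', hreads, haccept⟩ := exists_reads_of_search hα h hsearch
  rw [isSettled, Bool.or_eq_true, Bool.or_eq_true] at haccept
  rcases haccept with (hpeak | hcentre) | hpattern
  · have hwindow : Reads α (k - L'.length) [] (L'.reverse ++ R') := by
      simpa [reads_append_iff] using hreads
    obtain ⟨j, hj⟩ := exists_le_lambdaVal_of_hasPeak hpos hwindow hpeak
    exact absurd hj (ht j).not_ge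
  · exact absurd (lambdaVal_le_of_centreLE hpos hreads hcentre) hc.not_ge
  · obtain ⟨p, hp, hprefix⟩ := List.any_eq_true.1 hpattern
    rw [Bool.and_eq_true, List.isPrefixOf_iff_prefix, List.isPrefixOf_iff_prefix] at hprefix
    exact ⟨p, hp, hreads.mono hprefix.1 hprefix.2⟩

end Search

section Periodic

lemma forall_of_periodic {β : Type*} {f : ℤ → β} {p : ℕ} (hp : 0 < p) (hf : Function.Periodic f p)
    {P : β → Prop} (h : ∀ i < p, P (f i)) (k : ℤ) : P (f k) := by
  have hnonneg : 0 ≤ k % p := Int.emod_nonneg k (by omega)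
  have hlt : k % p < p := Int.emod_lt_of_pos k (by omega)
  have hmod : f (k % p) = f k := by
    rw [Int.emod_def, mul_comm]
    exact hf.sub_int_mul_eq (k / p)
  rw [← hmod, ← Int.toNat_of_nonneg hnonneg]
  exact h _ (by omega)

variable {α : ℤ → ℕ} {p : ℕ}

lemma reflect_eq_of_periodic (hp : 0 < p) (hα : Function.Periodic α p) {c : ℤ}
    (h : ∀ i < p, α (c - i) = α i) : reflect c α = α :=
  funext <| forall_of_periodic (f := fun n => (α (c - n), α n)) (P := fun v => v.1 = v.2) hp
    (fun n => Prod.ext (hα.const_sub c n) (hα n)) h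

lemma left_eq_right_of_reflect_eq {c : ℤ} (h : reflect c α = α) (k : ℤ) :
    left α k = right α (c + 1 - k) := by
  rw [← left_reflect, h]

lemma lambdaVal_symm (hα : ∀ n, 0 < α n) {c : ℤ} (h : reflect c α = α) (k : ℤ) :
    lambdaVal α (c - k) = lambdaVal α k := by
  rw [← lambdaVal_reflect hα, h]

lemma periodic_right (hper : Function.Periodic α p) : Function.Periodic (right α) p := fun k =>
  Stream'.ext fun n => by rw [get_right, get_right, add_right_comm, hper]

lemma periodic_left (hper : Function.Periodic α p) : Function.Periodic (left α) p := fun k =>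
  Stream'.ext fun n => by rw [get_left, get_left, add_sub_right_comm, add_sub_right_comm, hper]

lemma contFrac_right_eq_wordEval (hα : ∀ n, 0 < α n) (hper : Function.Periodic α p) (k : ℤ) :
    contFrac (right α k) = wordEval ((right α k).take p) (contFrac (right α k)) := by
  simpa only [drop_right, periodic_right hper _] using
    contFrac_eq_wordEval (s := right α k) (fun n => hα _) p

lemma isGreatest_range_lambdaVal (hp : 0 < p) (hper : Function.Periodic α p) (hα : ∀ n, 0 < α n)
    {x : ℝ} {c : ℚ} (hc : c ≤ x) {S : List ℕ} (hS : S ≠ []) (hSx : ∀ i ∈ S, lambdaVal α i = x)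
    (m : ℕ) (h : ∀ i < p, i ∈ S ∨ centreLE c ((left α i).take m) ((right α i).take m)) :
    IsGreatest (range (lambdaVal α)) x := by
  obtain ⟨i, hi⟩ := List.exists_mem_of_ne_nil S hS
  refine ⟨⟨i, hSx i hi⟩, forall_mem_range.2 ?_⟩
  refine forall_of_periodic (P := (· ≤ x)) hp (periodic_lambdaVal hper) fun j hj => ?_
  rcases h j hj with hmem | hsmall
  · exact (hSx j hmem).le
  · exact (lambdaVal_le_of_centreLE hα (reads_take α j m m) hsmall).trans hc

/-- The bi-infinite sequence that repeats the word `w`, with `w` starting at the index `0`. -/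
def periodicSeq (w : List ℕ) : ℤ → ℕ := fun n => w.getD (n % w.length).toNat 1

lemma periodic_periodicSeq (w : List ℕ) : Function.Periodic (periodicSeq w) w.length :=
  fun n => by simp only [periodicSeq, Int.add_emod_right]

lemma periodicSeq_pos {w : List ℕ} (hw : ∀ d ∈ w, 0 < d) (n : ℤ) : 0 < periodicSeq w n := by
  rw [periodicSeq, List.getD_eq_getElem?_getD]
  cases h : w[(n % w.length).toNat]? with
  | none => exact one_pos
  | some d => exact hw d (List.mem_of_getElem? h)

end Periodic

section Extremal

/-- The left endpoint of the gap. -/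
noncomputable def gapLeft : ℝ := 28 * √213378 / 4287

/-- The right endpoint of the gap. -/
noncomputable def gapRight : ℝ := (2497149255 + 2842763 * √213378) / 1258910718

/-- The period `1² 2³ 1² 2² 1³ 2²` of the sequence with Markov value `gapLeft`. -/
def lowerWord : List ℕ := [1, 1, 2, 2, 2, 1, 1, 2, 2, 1, 1, 1, 2, 2]

/-- A periodic sequence with Markov value `gapLeft`. -/
def lowerSeq : ℤ → ℕ := periodicSeq lowerWord

/-- The value of the purely periodic continued fraction with period `lowerWord`. -/
noncomputable def lowerTail : ℝ := contFrac (right lowerSeq 0)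

lemma lowerSeq_pos (n : ℤ) : 0 < lowerSeq n := periodicSeq_pos (by decide) n

lemma periodic_lowerSeq : Function.Periodic lowerSeq (14 : ℕ) := periodic_periodicSeq lowerWord

lemma reflect_lowerSeq : reflect 6 lowerSeq = lowerSeq :=
  reflect_eq_of_periodic (by decide) periodic_lowerSeq (by decide)

lemma one_le_lowerTail : 1 ≤ lowerTail := one_le_contFrac fun _ => lowerSeq_pos _

lemma lowerTail_quadratic : 6079 * lowerTail ^ 2 - 7826 * lowerTail - 4361 = 0 := by
  have hpos : 0 < lowerTail := zero_lt_one.trans_le one_le_lowerTail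
  have hfix : lowerTail = wordEval lowerWord lowerTail :=
    contFrac_right_eq_wordEval lowerSeq_pos periodic_lowerSeq 0
  rw [wordEval_eq_div hpos (show continuants lowerWord = !![10380, 4361; 6079, 2554] by decide),
    eq_div_iff (by positivity)] at hfix
  push_cast at hfix
  linear_combination hfix

lemma sqrt_eq_lowerTail : √213378 = (6079 * lowerTail - 3913) / 14 := by
  rw [Real.sqrt_eq_iff_mul_self_eq_of_pos (by linarith [one_le_lowerTail])]
  linear_combination 6079 / 196 * lowerTail_quadratic

lemma wordEval_add_inv_lowerTail :
    wordEval [2, 2] lowerTail + (wordEval [1, 1, 1, 2, 2] lowerTail)⁻¹ = gapLeft := by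
  have hpos : 0 < lowerTail := zero_lt_one.trans_le one_le_lowerTail
  rw [gapLeft, sqrt_eq_lowerTail,
    wordEval_eq_div hpos (show continuants [2, 2] = !![5, 2; 2, 1] by decide),
    wordEval_eq_div hpos (show continuants [1, 1, 1, 2, 2] = !![19, 8; 12, 5] by decide), inv_div,
    div_add_div _ _ (by positivity) (by positivity), div_eq_iff (by positivity)]
  push_cast
  linear_combination (-(76 * lowerTail + 35) / 4287) * lowerTail_quadratic

lemma lambdaVal_lowerSeq_twelve : lambdaVal lowerSeq 12 = gapLeft := by
  have hright : contFrac (right lowerSeq (12 + 2)) = lowerTail :=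
    congrArg contFrac (periodic_right periodic_lowerSeq 0)
  have hleft : contFrac (left lowerSeq (12 - 5)) = lowerTail :=
    congrArg contFrac (left_eq_right_of_reflect_eq reflect_lowerSeq 7)
  have hreads : Reads lowerSeq 12 [1, 1, 1, 2, 2] [2, 2] := by constructor <;> decide
  have hvalue : lambdaVal lowerSeq 12 = wordEval [2, 2] (contFrac (right lowerSeq (12 + 2))) +
      (wordEval [1, 1, 1, 2, 2] (contFrac (left lowerSeq (12 - 5))))⁻¹ :=
    lambdaVal_eq_wordEval lowerSeq_pos hreads
  rw [hvalue, hright, hleft, wordEval_add_inv_lowerTail]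

lemma isGreatest_lambdaVal_lowerSeq : IsGreatest (range (lambdaVal lowerSeq)) gapLeft := by
  have hbound : ((3.015 : ℚ) : ℝ) ≤ gapLeft := by
    have hsqrt : 461.9 < √213378 := Real.lt_sqrt_of_sq_lt (by norm_num)
    rw [gapLeft]
    push_cast
    linarith
  have hmirror : lambdaVal lowerSeq 8 = gapLeft := by
    rw [← lambdaVal_lowerSeq_twelve, ← lambdaVal_symm lowerSeq_pos reflect_lowerSeq 12]
    simpa using periodic_lambdaVal periodic_lowerSeq (-6)
  refine isGreatest_range_lambdaVal (by decide) periodic_lowerSeq lowerSeq_pos hbound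
    (S := [8, 12]) (by simp) ?_ 9 (by decide +kernel)
  simpa using ⟨hmirror, lambdaVal_lowerSeq_twelve⟩

/-- The periodic sequence of period `2⁴ 1⁴`, whose Markov value is the isolated point. -/
def isolatedSeq : ℤ → ℕ := periodicSeq [2, 2, 2, 2, 1, 1, 1, 1]

lemma isolatedSeq_pos (n : ℤ) : 0 < isolatedSeq n := periodicSeq_pos (by decide) n

lemma periodic_isolatedSeq : Function.Periodic isolatedSeq (8 : ℕ) := periodic_periodicSeq _

lemma reflect_isolatedSeq : reflect 3 isolatedSeq = isolatedSeq :=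
  reflect_eq_of_periodic (by decide) periodic_isolatedSeq (by decide)

lemma contFrac_right_isolatedSeq : contFrac (right isolatedSeq 0) = (9 + √229) / 10 := by
  set x := contFrac (right isolatedSeq 0)
  have hone : 1 ≤ x := one_le_contFrac fun _ => isolatedSeq_pos _
  have hpos : 0 < x := zero_lt_one.trans_le hone
  have hfix : x = wordEval [2, 2, 2, 2, 1, 1, 1, 1] x :=
    contFrac_right_eq_wordEval isolatedSeq_pos periodic_isolatedSeq 0
  rw [wordEval_eq_div hpos (show continuants [2, 2, 2, 2, 1, 1, 1, 1] = !![181, 111; 75, 46] by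
    decide), eq_div_iff (by positivity)] at hfix
  have hsqrt : √229 = 10 * x - 9 := by
    rw [Real.sqrt_eq_iff_mul_self_eq_of_pos (by linarith)]
    push_cast at hfix
    linear_combination 4 / 3 * hfix
  linear_combination -hsqrt / 10

lemma lambdaVal_isolatedSeq_zero : lambdaVal isolatedSeq 0 = √229 / 5 := by
  have hleft : contFrac (left isolatedSeq (0 - 4)) = contFrac (right isolatedSeq 0) := by
    rw [left_eq_right_of_reflect_eq reflect_isolatedSeq]
    exact congrArg contFrac (periodic_right periodic_isolatedSeq 0)
  have hreads : Reads isolatedSeq 0 [1, 1, 1, 1] [] := by constructor <;> decide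
  have hvalue : lambdaVal isolatedSeq 0 = contFrac (right isolatedSeq 0) +
      (wordEval [1, 1, 1, 1] (contFrac (left isolatedSeq (0 - 4))))⁻¹ :=
    lambdaVal_eq_wordEval isolatedSeq_pos hreads
  have hsq : √229 ^ 2 = 229 := Real.sq_sqrt (by norm_num)
  rw [hvalue, hleft, contFrac_right_isolatedSeq, wordEval_eq_div (by positivity)
    (show continuants [1, 1, 1, 1] = !![5, 3; 3, 2] by decide), inv_div]
  push_cast
  field_simp
  linear_combination -25 * hsq

lemma isGreatest_lambdaVal_isolatedSeq :
    IsGreatest (range (lambdaVal isolatedSeq)) (√229 / 5) := by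
  have hbound : ((3.02 : ℚ) : ℝ) ≤ √229 / 5 := by
    have hsqrt : 15.1 < √229 := Real.lt_sqrt_of_sq_lt (by norm_num)
    push_cast
    linarith
  have hmirror : lambdaVal isolatedSeq 3 = √229 / 5 := by
    rw [← lambdaVal_isolatedSeq_zero, ← lambdaVal_symm isolatedSeq_pos reflect_isolatedSeq 0,
      sub_zero]
  refine isGreatest_range_lambdaVal (by decide) periodic_isolatedSeq isolatedSeq_pos hbound
    (S := [0, 3]) (by simp) ?_ 9 (by decide +kernel)
  simpa using ⟨lambdaVal_isolatedSeq_zero, hmirror⟩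

/-- The bi-infinite sequence invariant under `n ↦ -1 - n` whose right half is `s`. -/
def mirror (s : Stream' ℕ) : ℤ → ℕ
  | .ofNat n => s.get n
  | .negSucc n => s.get n

lemma reflect_mirror (s : Stream' ℕ) : reflect (-1) (mirror s) = mirror s := by
  have hnat (n : ℕ) : -1 - (n : ℤ) = .negSucc n := by omega
  have hneg (n : ℕ) : -1 - .negSucc n = (n : ℤ) := by omega
  funext n
  cases n with
  | ofNat n => exact (congrArg (mirror s) (hnat n) :)
  | negSucc n => exact (congrArg (mirror s) (hneg n) :)

/-- The word `2⁴ 1² 2² 1³ 2²` read in both directions from the central `1⁴` of `upperSeq`. -/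
def upperWord : List ℕ := [2, 2, 2, 2, 1, 1, 2, 2, 1, 1, 1, 2, 2]

/-- A sequence with Markov value `gapRight`. It is symmetric about the central block `1⁴` and
eventually agrees with `lowerSeq` on both sides. -/
def upperSeq : ℤ → ℕ := mirror ([1, 1] ++ upperWord ++ₛ right lowerSeq 0)

lemma reflect_upperSeq : reflect (-1) upperSeq = upperSeq := reflect_mirror _

lemma right_upperSeq (k : ℕ) : right upperSeq (k + 15) = right lowerSeq k := by
  have hhalf : right upperSeq 0 = [1, 1] ++ upperWord ++ₛ right lowerSeq 0 :=
    Stream'.ext fun n => by rw [get_right, zero_add]; rfl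
  have hdrop : (right upperSeq 0).drop 15 = right lowerSeq 0 := by
    rw [hhalf]
    exact Stream'.drop_append_stream _ _
  have htail := congrArg (Stream'.drop k) hdrop
  rw [Stream'.drop_drop, drop_right, drop_right] at htail
  simpa [add_comm] using htail

lemma upperSeq_add (k : ℕ) : upperSeq (k + 15) = lowerSeq k := by
  simpa using congrArg (Stream'.get · 0) (right_upperSeq k)

lemma upperSeq_pos (n : ℤ) : 0 < upperSeq n := by
  have hnat (n : ℕ) : 0 < upperSeq n := by
    rcases lt_or_ge n 15 with hsmall | hlarge
    · interval_cases n <;> decide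
    · obtain ⟨m, rfl⟩ := Nat.exists_eq_add_of_le' hlarge
      exact (lowerSeq_pos m).trans_eq (upperSeq_add m).symm
  cases n with
  | ofNat n => exact hnat n
  | negSucc n => exact hnat n

lemma wordEval_upperWord_add_inv {x : ℝ} (hx : 0 < x) :
    wordEval upperWord x + (wordEval ([1, 1, 1, 1] ++ upperWord) x)⁻¹ =
      (10380 * x + 4361) / (4301 * x + 1807) + (39742 * x + 16697) / (64803 * x + 27226) := by
  rw [wordEval_eq_div hx (show continuants upperWord = !![10380, 4361; 4301, 1807] by decide),
    wordEval_eq_div hx (show continuants ([1, 1, 1, 1] ++ upperWord) =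
      !![64803, 27226; 39742, 16697] by decide), inv_div]
  norm_num only [Nat.cast_ofNat]

lemma antitoneOn_wordEval_upperWord_add_inv :
    AntitoneOn (fun x => wordEval upperWord x + (wordEval ([1, 1, 1, 1] ++ upperWord) x)⁻¹)
      (Ici 1) := by
  intro x hx y hy hxy
  have hposx : 0 < x := zero_lt_one.trans_le hx
  have hposy : 0 < y := zero_lt_one.trans_le hy
  have hdenom : (4301 * x + 1807) * (4301 * y + 1807) ≤
      (64803 * x + 27226) * (64803 * y + 27226) := by
    gcongr <;> norm_num
  have hdiff : (10380 * x + 4361) / (4301 * x + 1807) + (39742 * x + 16697) / (64803 * x + 27226) -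
      ((10380 * y + 4361) / (4301 * y + 1807) + (39742 * y + 16697) / (64803 * y + 27226)) =
      (y - x) * (1 / ((4301 * x + 1807) * (4301 * y + 1807)) -
        1 / ((64803 * x + 27226) * (64803 * y + 27226))) := by
    field_simp
    ring
  beta_reduce
  rw [wordEval_upperWord_add_inv hposx, wordEval_upperWord_add_inv hposy, ← sub_nonneg, hdiff]
  exact mul_nonneg (sub_nonneg.2 hxy)
    (sub_nonneg.2 (one_div_le_one_div_of_le (by positivity) hdenom))

lemma wordEval_upperWord_add_inv_lowerTail :
    wordEval upperWord lowerTail + (wordEval ([1, 1, 1, 1] ++ upperWord) lowerTail)⁻¹ =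
      gapRight := by
  have hpos : 0 < lowerTail := zero_lt_one.trans_le one_le_lowerTail
  rw [wordEval_upperWord_add_inv hpos, gapRight, sqrt_eq_lowerTail,
    div_add_div _ _ (by positivity) (by positivity), div_eq_iff (by positivity)]
  linear_combination (-37729922549209 / 839273812 * lowerTail - 1829037245399 / 96839286) *
    lowerTail_quadratic

lemma lambdaVal_upperSeq_two : lambdaVal upperSeq 2 = gapRight := by
  have hright : contFrac (right upperSeq (2 + 13)) = lowerTail :=
    congrArg contFrac (right_upperSeq 0)
  have hleft : contFrac (left upperSeq (2 - 17)) = lowerTail := by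
    rw [left_eq_right_of_reflect_eq reflect_upperSeq]
    exact hright
  have hreads : Reads upperSeq 2 ([1, 1, 1, 1] ++ upperWord) upperWord := by
    constructor <;> decide
  have hvalue : lambdaVal upperSeq 2 = wordEval upperWord (contFrac (right upperSeq (2 + 13))) +
      (wordEval ([1, 1, 1, 1] ++ upperWord) (contFrac (left upperSeq (2 - 17))))⁻¹ :=
    lambdaVal_eq_wordEval upperSeq_pos hreads
  rw [hvalue, hright, hleft, wordEval_upperWord_add_inv_lowerTail]

lemma left_upperSeq_take (k : ℕ) :
    (left upperSeq (k + 23)).take 8 = (left lowerSeq (k + 8)).take 8 := by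
  have htake := take_left_eq_take_left (m := 8) (n := 8)
    (fun i _ => congrArg (Stream'.get · i) (right_upperSeq k)) le_rfl
  rwa [add_assoc] at htake

lemma lambdaVal_upperSeq_add_le (k : ℕ) : lambdaVal upperSeq (k + 23) ≤ (3.02665 : ℚ) := by
  have hlower : ∀ i : ℕ, i < 14 →
      centreLE 3.02665 ((left lowerSeq i).take 8) ((right lowerSeq i).take 8) := by
    decide +kernel
  have hcentre := forall_of_periodic (f := fun i => (left lowerSeq i, right lowerSeq i))
    (P := fun v => centreLE 3.02665 (v.1.take 8) (v.2.take 8)) (by decide)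
    (fun i => Prod.ext (periodic_left periodic_lowerSeq i)
      (periodic_right periodic_lowerSeq i)) hlower (k + 8)
  have hright : right upperSeq (k + 23) = right lowerSeq (k + 8) := by
    simpa [add_assoc] using right_upperSeq (k + 8)
  rw [← left_upperSeq_take, ← hright] at hcentre
  exact lambdaVal_le_of_centreLE upperSeq_pos (reads_take _ _ 8 8) hcentre

lemma isGreatest_lambdaVal_upperSeq : IsGreatest (range (lambdaVal upperSeq)) gapRight := by
  have hbound : ((3.02665 : ℚ) : ℝ) ≤ gapRight := by
    have hsqrt : 461.928 < √213378 := Real.lt_sqrt_of_sq_lt (by norm_num)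
    rw [gapRight]
    push_cast
    linarith
  have hsmall : ∀ i : ℕ, i < 23 → i = 2 ∨
      centreLE 3.02665 ((left upperSeq i).take 9) ((right upperSeq i).take 9) := by
    decide +kernel
  have hnat (n : ℕ) : lambdaVal upperSeq n ≤ gapRight := by
    rcases lt_or_ge n 23 with hlt | hge
    · rcases hsmall n hlt with rfl | hcentre
      · exact lambdaVal_upperSeq_two.le
      · exact (lambdaVal_le_of_centreLE upperSeq_pos (reads_take _ _ 9 9) hcentre).trans hbound
    · obtain ⟨m, rfl⟩ := Nat.exists_eq_add_of_le' hge
      exact (lambdaVal_upperSeq_add_le m).trans hbound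
  refine ⟨⟨2, lambdaVal_upperSeq_two⟩, forall_mem_range.2 fun n => ?_⟩
  cases n with
  | ofNat n => exact hnat n
  | negSucc n =>
    rw [← lambdaVal_symm upperSeq_pos reflect_upperSeq]
    simpa [Int.negSucc_eq] using hnat n

end Extremal

section Gap

/-- A sequence that can have a Markov value below `gapRight`: its digits are `1` and `2`, and
every `λ_k` is smaller than `gapRight`. -/
structure IsAdmissible (α : ℤ → ℕ) : Prop where
  mem : ∀ n, α n ∈ [1, 2]
  lt : ∀ k, lambdaVal α k < gapRight

/-- A rational number slightly above `gapRight`. -/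
def peakBound : ℚ := 3.0266663366

/-- A rational number slightly below `gapLeft`. -/
def centreBound : ℚ := 3.01702

lemma gapRight_lt_peakBound : gapRight < peakBound := by
  have hsqrt : √213378 < 461.92856595 := (Real.sqrt_lt' (by norm_num)).2 (by norm_num)
  rw [gapRight, peakBound]
  push_cast
  linarith

lemma centreBound_lt_gapLeft : centreBound < gapLeft := by
  have hsqrt : 461.92849 < √213378 := Real.lt_sqrt_of_sq_lt (by norm_num)
  rw [gapLeft, centreBound]
  push_cast
  linarith

lemma mem_one_two_of_lambdaVal_lt {α : ℤ → ℕ} (hα : ∀ n, 0 < α n)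
    (hlt : ∀ k, lambdaVal α k < (7 / 2 : ℚ)) (n : ℤ) : α n ∈ [1, 2] := by
  have hmem (m : ℤ) : α m ∈ [1, 2, 3] := by
    have hdigit : α m < (4 : ℝ) := by
      have hlt' := (digit_lt_lambdaVal hα m).trans (hlt m)
      push_cast at hlt'
      linarith
    have hlt_four : α m < 4 := by exact_mod_cast hdigit
    have hpos := hα m
    simp only [List.mem_cons, List.not_mem_nil, or_false]
    omega
  by_contra hn
  have hdigit : α n = 3 := by
    have hn' := hmem n
    simp only [List.mem_cons, List.not_mem_nil, or_false] at hn hn'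
    omega
  have hthree : Reads α n [] [3] := ⟨rfl, by rw [right_eq_cons, hdigit]; rfl⟩
  have hpos : ((0 : ℚ) : ℝ) < lambdaVal α n := by
    push_cast
    exact (Nat.cast_nonneg _).trans_lt (digit_lt_lambdaVal hα n)
  obtain ⟨p, hp, -⟩ := exists_pattern_of_search (P := []) (n := 1) hα hmem hlt hpos hthree
    (by decide +kernel)
  exact List.not_mem_nil hp

lemma isAdmissible_of_markovValue_lt {α : ℤ → ℕ} (hα : ∀ n, 0 < α n)
    (hbdd : BddAbove (range (lambdaVal α))) (hlt : markovValue α < gapRight) :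
    IsAdmissible α := by
  have hlt' (k : ℤ) : lambdaVal α k < gapRight := (le_ciSup hbdd k).trans_lt hlt
  refine ⟨mem_one_two_of_lambdaVal_lt hα fun k => ((hlt' k).trans gapRight_lt_peakBound).trans ?_,
    hlt'⟩
  exact Rat.cast_lt.2 (by decide +kernel)

/-- If a tail first leaves `lowerSeq` in the direction that increases its value, some
`λ ≥ peakBound` occurs nearby. By periodicity it is enough to look back over at most one period. -/
lemma lowerSeq_deviation_search : ∀ r : ℕ, r < 14 → ∀ d ∈ [1, 2],
    Even (r + 1) ∧ lowerSeq (r + 1) < d ∨ Odd (r + 1) ∧ d < lowerSeq (r + 1) →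
      search [1, 2] (isSettled peakBound 0 []) 14 ((left lowerSeq (r + 1)).take (r + 1)) [d] := by
  decide +kernel

/-- The windows, with central digit `2` between the two words of each pair, at which an admissible
sequence can have `λ > centreBound`, up to reflection. -/
def gapPatterns : List (List ℕ × List ℕ) :=
  [([1, 1, 1, 2, 2, 1], [2, 1, 1]),
    ([1, 1, 1, 1, 2, 2, 2, 2], [2, 2, 2, 1, 1, 1, 1]),
    ([1, 1, 1, 1, 2, 2, 2, 2, 1, 1, 2, 2, 1, 1, 1, 2, 2, 1, 1],
      [2, 2, 2, 1, 1, 2, 2, 1, 1, 1, 2, 2, 1, 1])]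

lemma gapPatterns_search : search [1, 2] (isSettled peakBound centreBound
    (gapPatterns.flatMap fun p => [(p.1, 2 :: p.2), (p.2, 2 :: p.1)])) 22 [] [] := by
  decide +kernel

lemma isolatedSeq_search : search [1, 2] (isSettled peakBound 0
    [([1, 1, 1, 1, 2, 2, 2, 2, 1, 1, 1, 1, 2, 2, 2, 2],
      [2, 2, 2, 2, 1, 1, 1, 1, 2, 2, 2, 2, 1, 1, 1, 1])]) 14
    [1, 1, 1, 1, 2, 2, 2, 2] [2, 2, 2, 2, 1, 1, 1, 1] := by
  decide +kernel

variable {α : ℤ → ℕ} {k : ℤ}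

namespace IsAdmissible

lemma pos (hα : IsAdmissible α) (n : ℤ) : 0 < α n := by
  have hmem := hα.mem n
  simp only [List.mem_cons, List.not_mem_nil, or_false] at hmem
  omega

lemma reflect (hα : IsAdmissible α) (c : ℤ) : IsAdmissible (reflect c α) where
  mem n := hα.mem (c - n)
  lt k := (lambdaVal_reflect hα.pos c k).trans_lt (hα.lt (c - k))

lemma exists_pattern (hα : IsAdmissible α) {c : ℚ} {P : List (List ℕ × List ℕ)} {n : ℕ}
    {L R : List ℕ} (hc : c < lambdaVal α k) (h : Reads α k L R)
    (hsearch : search [1, 2] (isSettled peakBound c P) n L R) : ∃ p ∈ P, Reads α k p.1 p.2 :=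
  exists_pattern_of_search hα.pos hα.mem (fun j => (hα.lt j).trans gapRight_lt_peakBound) hc h
    hsearch

lemma lambdaVal_pos (hα : IsAdmissible α) (k : ℤ) : ((0 : ℚ) : ℝ) < lambdaVal α k :=
  Rat.cast_zero.trans_lt ((Nat.cast_nonneg _).trans_lt (digit_lt_lambdaVal hα.pos k))

lemma not_deviates_from_lowerSeq (hα : IsAdmissible α) {p : ℤ} {n : ℕ}
    (heq : ∀ i < n + 1, (right α p).get i = (right lowerSeq 0).get i) :
    ¬(Even (n + 1) ∧ (right lowerSeq 0).get (n + 1) < (right α p).get (n + 1) ∨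
      Odd (n + 1) ∧ (right α p).get (n + 1) < (right lowerSeq 0).get (n + 1)) := by
  intro hdev
  obtain ⟨q, r, hr, rfl⟩ : ∃ q r, r < 14 ∧ n = r + 14 * q :=
    ⟨n / 14, n % 14, Nat.mod_lt _ (by decide), (Nat.mod_add_div n 14).symm⟩
  have hindex : ((r + 14 * q + 1 : ℕ) : ℤ) = r + 1 + q * 14 := by push_cast; ring
  have hleft : left lowerSeq (r + 14 * q + 1 : ℕ) = left lowerSeq (r + 1) := by
    rw [hindex]
    exact (periodic_left periodic_lowerSeq).nat_mul q _
  have hdigit : lowerSeq (r + 14 * q + 1 : ℕ) = lowerSeq (r + 1) := by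
    rw [hindex]
    exact periodic_lowerSeq.nat_mul q _
  have hparity : Even (r + 14 * q + 1) ↔ Even (r + 1) := by grind
  have hreads : Reads α (p + (r + 14 * q + 1 : ℕ)) ((left lowerSeq (r + 1)).take (r + 1))
      [α (p + (r + 14 * q + 1 : ℕ))] := by
    refine ⟨?_, by rw [right_eq_cons]; rfl⟩
    rw [Stream'.length_take, take_left_eq_take_left heq (by omega), zero_add, hleft]
  rw [get_right, get_right, zero_add, hdigit, ← Nat.not_even_iff_odd, hparity,
    Nat.not_even_iff_odd] at hdev
  have hsearch := lowerSeq_deviation_search r hr _ (hα.mem _) hdev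
  obtain ⟨w, hw, -⟩ := hα.exists_pattern (hα.lambdaVal_pos _) hreads hsearch
  exact List.not_mem_nil hw

lemma contFrac_right_le_lowerTail (hα : IsAdmissible α) {p : ℤ} (hp : α p = 1) :
    contFrac (right α p) ≤ lowerTail := by
  refine contFrac_le_contFrac (fun n => hα.pos _) (fun n => lowerSeq_pos _) fun n heq hdev => ?_
  rcases n with _ | n
  · have hzero : (right α p).get 0 = (right lowerSeq 0).get 0 := by
      rw [get_right, Nat.cast_zero, add_zero, hp]
      rfl
    exact hdev.elim (fun h => h.2.ne' hzero) fun h => h.2.ne hzero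
  · exact hα.not_deviates_from_lowerSeq heq hdev

lemma contFrac_left_le_lowerTail (hα : IsAdmissible α) {p : ℤ} (hp : α p = 1) :
    contFrac (left α (p + 1)) ≤ lowerTail := by
  simpa [right_reflect] using (hα.reflect p).contFrac_right_le_lowerTail (p := 0)
    (by simpa [MarkovGap.reflect] using hp)

lemma lambdaVal_le_gapLeft_of_reads (hα : IsAdmissible α)
    (h : Reads α k [1, 1, 1, 2, 2, 1] [2, 2, 1, 1]) : lambdaVal α k ≤ gapLeft := by
  have hright : contFrac (right α (k + 2)) ≤ lowerTail :=
    hα.contFrac_right_le_lowerTail (h.right_digit 2 (by decide))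
  have hleft : contFrac (left α (k - 5)) ≤ lowerTail := by
    have hdigit : α (k - 1 - 5) = 1 := h.left_digit 5 (by decide)
    have hindex : k - 1 - 5 + 1 = k - 5 := by ring
    exact hindex ▸ hα.contFrac_left_le_lowerTail hdigit
  have hposr : 0 < contFrac (right α (k + 2)) := contFrac_pos fun _ => hα.pos _
  have hposl : 0 < contFrac (left α (k - 5)) := contFrac_pos fun _ => hα.pos _
  have hvalue : lambdaVal α k = wordEval [2, 2] (contFrac (right α (k + 2))) +
      (wordEval [1, 1, 1, 2, 2] (contFrac (left α (k - 5))))⁻¹ :=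
    lambdaVal_eq_wordEval hα.pos (h.mono (by decide) (by decide))
  rw [hvalue, ← wordEval_add_inv_lowerTail]
  exact add_le_add ((wordEval_le_wordEval hposr hright).1 (by decide))
    (inv_anti₀ (wordEval_pos (hposl.trans_le hleft))
      ((wordEval_le_wordEval hposl hleft).2 (by decide)))

lemma reads_isolated_add (hα : IsAdmissible α)
    (h : Reads α k [1, 1, 1, 1, 2, 2, 2, 2] [2, 2, 2, 2, 1, 1, 1, 1]) (j : ℤ) :
    Reads α (k + 8 * j) [1, 1, 1, 1, 2, 2, 2, 2] [2, 2, 2, 2, 1, 1, 1, 1] := by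
  have hext {m : ℤ} (hm : Reads α m [1, 1, 1, 1, 2, 2, 2, 2] [2, 2, 2, 2, 1, 1, 1, 1]) :
      Reads α m [1, 1, 1, 1, 2, 2, 2, 2, 1, 1, 1, 1, 2, 2, 2, 2]
        [2, 2, 2, 2, 1, 1, 1, 1, 2, 2, 2, 2, 1, 1, 1, 1] := by
    simpa using hα.exists_pattern (hα.lambdaVal_pos m) hm isolatedSeq_search
  induction j with
  | zero => simpa using h
  | succ j ih =>
    have hshift := (reads_append_iff [2, 2, 2, 2, 1, 1, 1, 1]).1 (hext ih)
    rw [mul_add, mul_one, ← add_assoc]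
    exact hshift.mono (by decide) (by decide)
  | pred j ih =>
    have hindex : k + 8 * (-(j : ℤ) - 1) + 8 = k + 8 * -(j : ℤ) := by ring
    have hshift : Reads α (k + 8 * (-j - 1) + 8)
        ([2, 2, 2, 2, 1, 1, 1, 1].reverse ++ [1, 1, 1, 1, 2, 2, 2, 2]) [2, 2, 2, 2, 1, 1, 1, 1] :=
      hindex ▸ (hext ih).mono (List.prefix_refl _) (by decide)
    exact ((reads_append_iff [2, 2, 2, 2, 1, 1, 1, 1]).2 hshift).mono (by decide) (by decide)

lemma markovValue_eq_of_reads_isolated (hα : IsAdmissible α)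
    (h : Reads α k [1, 1, 1, 1, 2, 2, 2, 2] [2, 2, 2, 2, 1, 1, 1, 1]) :
    markovValue α = √229 / 5 := by
  have hshift : (fun n => α (n + k)) = isolatedSeq := by
    funext n
    have hlt : (n % 8).toNat < [2, 2, 2, 2, 1, 1, 1, 1].length := by
      simp only [List.length_cons, List.length_nil]
      omega
    have hdigit := (hα.reads_isolated_add h (n / 8)).right_digit (n % 8).toNat hlt
    have hindex : k + 8 * (n / 8) + (n % 8).toNat = n + k := by omega
    rw [hindex, ← List.getD_eq_getElem _ 1 hlt] at hdigit
    exact hdigit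
  rw [← markovValue_comp_add α k, hshift]
  exact markovValue_eq_of_isGreatest isGreatest_lambdaVal_isolatedSeq

lemma not_reads_upper (hα : IsAdmissible α) : ¬Reads α k ([1, 1, 1, 1] ++ upperWord ++ [1, 1])
    (upperWord ++ [1, 1]) := by
  intro h
  -- Reflecting about the centre of the block `1⁴` exchanges the two tails.
  wlog hle : contFrac (right α (k + 13)) ≤ contFrac (left α (k - 17)) generalizing α
  · have hindex : 2 * k - 5 + 1 - k = k - 4 := by ring
    have hcentre : k - 4 + ([1, 1, 1, 1] : List ℕ).length = k := sub_add_cancel k 4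
    have hmirror : Reads (MarkovGap.reflect (2 * k - 5) α) (k - 4)
        (upperWord ++ [1, 1]) ([1, 1, 1, 1] ++ (upperWord ++ [1, 1])) :=
      hindex ▸ h.reflect (2 * k - 5)
    have hleft : 2 * k - 5 + 1 - (k + 13) = k - 17 := by ring
    have hright : 2 * k - 5 + 1 - (k - 17) = k + 13 := by ring
    have hshift := (reads_append_iff [1, 1, 1, 1]).1 hmirror
    rw [hcentre] at hshift
    refine this (hα.reflect (2 * k - 5)) hshift ?_
    rw [right_reflect, left_reflect, hleft, hright]
    exact le_of_not_ge hle
  have hpos : 0 < contFrac (right α (k + 13)) := contFrac_pos fun _ => hα.pos _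
  have hone : 1 ≤ contFrac (right α (k + 13)) := one_le_contFrac fun _ => hα.pos _
  have hmax : contFrac (right α (k + 13)) ≤ lowerTail :=
    hα.contFrac_right_le_lowerTail (h.right_digit 13 (by decide))
  have hvalue : lambdaVal α k = wordEval upperWord (contFrac (right α (k + 13))) +
      (wordEval ([1, 1, 1, 1] ++ upperWord) (contFrac (left α (k - 17))))⁻¹ :=
    lambdaVal_eq_wordEval hα.pos (h.mono (by decide) (by decide))
  refine (hα.lt k).not_ge ?_
  rw [← wordEval_upperWord_add_inv_lowerTail, hvalue]
  refine (antitoneOn_wordEval_upperWord_add_inv hone one_le_lowerTail hmax).trans ?_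
  exact add_le_add_right (inv_anti₀ (wordEval_pos (hpos.trans_le hle))
    ((wordEval_le_wordEval hpos hle).2 (by decide))) _

lemma markovValue_eq_of_reads (hα : IsAdmissible α) (hlt : gapLeft < lambdaVal α k)
    {p : List ℕ × List ℕ} (hp : p ∈ gapPatterns) (h : Reads α k p.1 (2 :: p.2)) :
    markovValue α = √229 / 5 := by
  simp only [gapPatterns, List.mem_cons, List.not_mem_nil, or_false] at hp
  rcases hp with rfl | rfl | rfl
  · exact absurd (hα.lambdaVal_le_gapLeft_of_reads h) hlt.not_ge
  · exact hα.markovValue_eq_of_reads_isolated h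
  · exact absurd h hα.not_reads_upper

lemma markovValue_eq (hα : IsAdmissible α) (hlt : gapLeft < lambdaVal α k) :
    markovValue α = √229 / 5 := by
  have hcentre : centreBound < lambdaVal α k := centreBound_lt_gapLeft.trans hlt
  obtain ⟨q, hq, hreads⟩ := hα.exists_pattern hcentre (reads_take α k 0 0) gapPatterns_search
  obtain ⟨p, hp, hpq⟩ := List.mem_flatMap.1 hq
  simp only [List.mem_cons, List.not_mem_nil, or_false] at hpq
  rcases hpq with rfl | rfl
  · exact hα.markovValue_eq_of_reads hlt hp hreads
  · have hmirror : Reads (MarkovGap.reflect (2 * k) α) k p.1 (2 :: p.2) := by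
      simpa [two_mul] using (reads_cons_iff.1 hreads).reflect (2 * k)
    rw [← markovValue_reflect hα.pos (2 * k)]
    refine (hα.reflect (2 * k)).markovValue_eq_of_reads ?_ hp hmirror
    rwa [lambdaVal_reflect hα.pos, two_mul, add_sub_cancel_right]

end IsAdmissible

lemma eq_of_mem_markovSpectrum {x : ℝ} (hx : x ∈ markovSpectrum) (hleft : gapLeft < x)
    (hright : x < gapRight) : x = √229 / 5 := by
  obtain ⟨α, hα, hbdd, rfl⟩ := hx
  obtain ⟨k, hk⟩ := exists_lt_of_lt_ciSup hleft
  exact (isAdmissible_of_markovValue_lt hα hbdd hright).markovValue_eq hk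

lemma gapLeft_lt_sqrt : gapLeft < √229 / 5 := by
  have hupper : √213378 < 461.93 := (Real.sqrt_lt' (by norm_num)).2 (by norm_num)
  have hlower : 15.13 < √229 := Real.lt_sqrt_of_sq_lt (by norm_num)
  rw [gapLeft]
  linarith

lemma sqrt_lt_gapRight : √229 / 5 < gapRight := by
  have hupper : √229 < 15.133 := (Real.sqrt_lt' (by norm_num)).2 (by norm_num)
  have hlower : 461.928 < √213378 := Real.lt_sqrt_of_sq_lt (by norm_num)
  rw [gapRight]
  linarith

end Gap

end MarkovGap

open MarkovGap

/-- The intersection of the Markov spectrum with the open interval consists of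
exactly one (hence isolated) point, and both endpoints belong to the Markov
spectrum. -/
theorem markov_gap_10 :
    markovSpectrum ∩ Ioo (28 * Real.sqrt 213378 / 4287) ((2497149255 + 2842763 * Real.sqrt 213378) / 1258910718) = {(Real.sqrt 229 / 5 : ℝ)} ∧
    (28 * Real.sqrt 213378 / 4287) ∈ markovSpectrum ∧ ((2497149255 + 2842763 * Real.sqrt 213378) / 1258910718) ∈ markovSpectrum := by
  refine ⟨Subset.antisymm ?_ ?_,
    mem_markovSpectrum_of_isGreatest lowerSeq_pos isGreatest_lambdaVal_lowerSeq,
    mem_markovSpectrum_of_isGreatest upperSeq_pos isGreatest_lambdaVal_upperSeq⟩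
  · rintro x ⟨hx, hleft, hright⟩
    exact eq_of_mem_markovSpectrum hx hleft hright
  · rw [singleton_subset_iff]
    exact ⟨mem_markovSpectrum_of_isGreatest isolatedSeq_pos isGreatest_lambdaVal_isolatedSeq,
      gapLeft_lt_sqrt, sqrt_lt_gapRight⟩
end

section
/- The open interval (√66045/79, (190+4√30)/65) is a gap of the Markov spectrum: M ∩ (√66045/79, (190+4√30)/65) = ∅, while both endpoints √66045/79 and (190+4√30)/65 belong to M. -/
open Filter Set MeasureTheory
open scoped ENNReal

/-!
Two continued fractions are compared at their first differing digit, and the effect of that digit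
is reversed at odd places. Both ends of the gap are values `λ_0` of explicit sequences of digits
`1` and `2`. Suppose that all `λ_k(α)` lie below the right end. Crude interval bounds show that the
digits are at most `2` and exclude the words `1212` and `2121`. Without `2121`, a tail starting with
`21112` is at least the corresponding tail of the right extremal sequence, so no digit can start
`21112` in both directions, which excludes `211121112`. It remains to bound `λ_k` at a digit `2`
between two digits `1`. Its two tails are then bounded by the two tails of the left extremal
sequence, because at the first difference a larger `α` would complete one of the excluded words.
-/

/-! ### Convergence of continued fractions -/

theorem one_le_cfConv {a : ℕ → ℝ} (ha : ∀ n, 1 ≤ a n) (n : ℕ) : 1 ≤ cfConv a n := by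
  induction n generalizing a with
  | zero => exact ha 0
  | succ n ih =>
    have htail : 1 ≤ cfConv (fun i => a (i + 1)) n := ih fun i => ha (i + 1)
    have hinv : 0 < 1 / cfConv (fun i => a (i + 1)) n := by positivity
    simp only [cfConv]
    linarith [ha 0]

theorem abs_add_one_div_sub_add_one_div_le_one (d : ℝ) {x y : ℝ} (hx : 1 ≤ x) (hy : 1 ≤ y) :
    |(d + 1 / x) - (d + 1 / y)| ≤ 1 := by
  have hx' : 1 / x ∈ Icc 0 1 := ⟨by positivity, (div_le_one (by positivity)).2 hx⟩
  have hy' : 1 / y ∈ Icc 0 1 := ⟨by positivity, (div_le_one (by positivity)).2 hy⟩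
  rw [add_sub_add_left_eq_sub, abs_sub_le_iff]
  exact ⟨by linarith [hx'.2, hy'.1], by linarith [hx'.1, hy'.2]⟩

theorem abs_two_quotients_sub_le (d : ℝ) {e x y : ℝ} (he : 1 ≤ e) (hx : 1 ≤ x) (hy : 1 ≤ y) :
    |(d + 1 / (e + 1 / x)) - (d + 1 / (e + 1 / y))| ≤ |x - y| / 4 := by
  have hdiff : (d + 1 / (e + 1 / x)) - (d + 1 / (e + 1 / y)) =
      (x - y) / ((e * x + 1) * (e * y + 1)) := by
    field_simp
    ring
  have hex : 1 ≤ e * x := one_le_mul_of_one_le_of_one_le he hx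
  have hey : 1 ≤ e * y := one_le_mul_of_one_le_of_one_le he hy
  have hden : 4 ≤ (e * x + 1) * (e * y + 1) := by nlinarith
  rw [hdiff, abs_div, abs_of_pos (by linarith : 0 < (e * x + 1) * (e * y + 1))]
  gcongr

theorem dist_cfConv_succ_le {a : ℕ → ℝ} (ha : ∀ n, 1 ≤ a (n + 1)) (n : ℕ) :
    dist (cfConv a n) (cfConv a (n + 1)) ≤ 2 * (1 / 2) ^ n := by
  rw [dist_comm, Real.dist_eq]
  induction n using Nat.twoStepInduction generalizing a with
  | zero =>
    have hinv : 1 / a 1 ≤ 1 := (div_le_one (by linarith [ha 0])).2 (ha 0)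
    have hpos : 0 ≤ 1 / a 1 := by have := ha 0; positivity
    simp only [cfConv, zero_add, add_sub_cancel_left, abs_of_nonneg hpos]
    linarith
  | one =>
    have h := abs_add_one_div_sub_add_one_div_le_one (a 0)
      (one_le_cfConv (a := fun i => a (i + 1)) ha 1) (one_le_cfConv (a := fun i => a (i + 1)) ha 0)
    simpa only [cfConv, pow_one, mul_one_div, div_self (two_ne_zero' ℝ)] using h
  | more n ih _ =>
    have htail := one_le_cfConv (a := fun i => a (i + 2)) fun i => ha (i + 1)
    calc |cfConv a (n + 3) - cfConv a (n + 2)|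
        ≤ |cfConv (fun i => a (i + 2)) (n + 1) - cfConv (fun i => a (i + 2)) n| / 4 :=
          abs_two_quotients_sub_le (a 0) (ha 0) (htail (n + 1)) (htail n)
      _ ≤ 2 * (1 / 2) ^ n / 4 := by gcongr; exact ih fun i => ha (i + 2)
      _ = 2 * (1 / 2) ^ (n + 2) := by ring

theorem tendsto_cfConv {a : ℕ → ℝ} (ha : ∀ n, 1 ≤ a (n + 1)) :
    Tendsto (cfConv a) atTop (nhds (cfVal a)) :=
  (cauchySeq_of_le_geometric (1 / 2) 2 (by norm_num) (dist_cfConv_succ_le ha)).tendsto_limUnder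

theorem one_le_cfVal {a : ℕ → ℝ} (ha : ∀ n, 1 ≤ a n) : 1 ≤ cfVal a :=
  ge_of_tendsto' (tendsto_cfConv fun n => ha (n + 1)) (one_le_cfConv ha)

theorem cfVal_eq_add_one_div {a : ℕ → ℝ} (ha : ∀ n, 1 ≤ a (n + 1)) :
    cfVal a = a 0 + 1 / cfVal (fun n => a (n + 1)) := by
  have htail := one_le_cfVal (a := fun n => a (n + 1)) ha
  have hlim : Tendsto (fun n => a 0 + 1 / cfConv (fun i => a (i + 1)) n) atTop
      (nhds (a 0 + 1 / cfVal fun n => a (n + 1))) :=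
    (tendsto_const_nhds.div (tendsto_cfConv fun n => ha (n + 1)) (by positivity)).const_add _
  exact tendsto_nhds_unique ((tendsto_cfConv ha).comp (tendsto_add_atTop_nat 1)) hlim

/-! ### Complete quotients of bi-infinite sequences -/

/-- The complete quotient `[α_k; α_{k+1}, α_{k+2}, …]` of a bi-infinite sequence. -/
noncomputable def cfTail (α : ℤ → ℕ) (k : ℤ) : ℝ := cfVal fun n => (α (k + n) : ℝ)

/-- The sequence read from right to left; its complete quotients are the continued fractions
`[α_k; α_{k-1}, α_{k-2}, …]`. -/
def reversal (α : ℤ → ℕ) (k : ℤ) : ℕ := α (-k)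

theorem reversal_neg (α : ℤ → ℕ) (k : ℤ) : reversal α (-k) = α k := by
  rw [reversal, neg_neg]

theorem reversal_reversal (α : ℤ → ℕ) : reversal (reversal α) = α :=
  funext fun k => reversal_neg α k

theorem reversal_pos {α : ℤ → ℕ} (hα : ∀ k, 0 < α k) (k : ℤ) : 0 < reversal α k := hα (-k)

theorem reversal_le {α : ℤ → ℕ} {N : ℕ} (hN : ∀ k, α k ≤ N) (k : ℤ) : reversal α k ≤ N := hN (-k)

section

variable {α β : ℤ → ℕ} {j k : ℤ}

theorem cfTail_congr (h : ∀ n : ℕ, α (j + n) = β (k + n)) : cfTail α j = cfTail β k := by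
  simp only [cfTail, h]

theorem one_le_cfTail (hα : ∀ n, 0 < α n) (k : ℤ) : 1 ≤ cfTail α k :=
  one_le_cfVal fun _ => Nat.one_le_cast.2 (hα _)

theorem cfTail_eq (hα : ∀ n, 0 < α n) (k : ℤ) : cfTail α k = α k + 1 / cfTail α (k + 1) := by
  have hshift (n : ℕ) : k + ((n + 1 : ℕ) : ℤ) = k + 1 + n := by
    push_cast
    ring
  rw [cfTail, cfVal_eq_add_one_div fun n => by exact_mod_cast hα (k + (n + 1 : ℕ))]
  simp only [cfTail, hshift, Nat.cast_zero, add_zero]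

theorem lambdaVal_eq (hα : ∀ n, 0 < α n) (k : ℤ) :
    lambdaVal α k = cfTail α k + cfTail (reversal α) (-k) - α k := by
  have hshift (n : ℕ) : reversal α (-k + 1 + n) = α (k - (n + 1)) := by
    rw [reversal]
    congr 1
    ring
  have hback : cfVal (fun n => if n = 0 then 0 else (α (k - n) : ℝ)) =
      1 / cfTail (reversal α) (-k + 1) := by
    rw [cfVal_eq_add_one_div fun n => by
      rw [if_neg n.succ_ne_zero]; exact Nat.one_le_cast.2 (hα _)]
    simp [cfTail, hshift]
  rw [cfTail_eq (reversal_pos hα) (-k), reversal_neg, lambdaVal, hback, ← cfTail]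
  ring

theorem lambdaVal_reversal (hα : ∀ n, 0 < α n) (k : ℤ) :
    lambdaVal (reversal α) k = lambdaVal α (-k) := by
  rw [lambdaVal_eq (reversal_pos hα), lambdaVal_eq hα, reversal_reversal,
    neg_neg, reversal]
  ring

/-! ### The alternating lexicographic order -/

theorem cfTail_le_add_one (hα : ∀ n, 0 < α n) (k : ℤ) : cfTail α k ≤ α k + 1 := by
  have hnext := one_le_cfTail hα (k + 1)
  rw [cfTail_eq hα]
  gcongr
  exact (div_le_one (by positivity)).2 hnext

theorem cfTail_lt_of_lt (hα : ∀ n, 0 < α n) (hβ : ∀ n, 0 < β n) (h : α j < β k) :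
    cfTail α j < cfTail β k := by
  have hnext := one_le_cfTail hβ (k + 1)
  calc cfTail α j ≤ α j + 1 := cfTail_le_add_one hα j
    _ ≤ β k := by exact_mod_cast h
    _ < β k + 1 / cfTail β (k + 1) := lt_add_of_pos_right _ (by positivity)
    _ = cfTail β k := (cfTail_eq hβ k).symm

theorem cfTail_le_cfTail_of_eq (hα : ∀ n, 0 < α n) (hβ : ∀ n, 0 < β n) (h : α j = β k)
    (hle : cfTail β (k + 1) ≤ cfTail α (j + 1)) : cfTail α j ≤ cfTail β k := by
  have hnext := one_le_cfTail hβ (k + 1)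
  rw [cfTail_eq hα, cfTail_eq hβ, h]
  gcongr

theorem cfTail_le_cfTail_of_agree (hα : ∀ n, 0 < α n) (hβ : ∀ n, 0 < β n) (n : ℕ)
    (hagree : ∀ i < n, α (j + i) = β (k + i))
    (heven : Even n → cfTail α (j + n) ≤ cfTail β (k + n))
    (hodd : Odd n → cfTail β (k + n) ≤ cfTail α (j + n)) : cfTail α j ≤ cfTail β k := by
  induction n with
  | zero => simpa only [Nat.cast_zero, add_zero] using heven .zero
  | succ n ih =>
    rw [Nat.cast_succ, ← add_assoc, ← add_assoc] at heven hodd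
    have hn := hagree n n.lt_succ_self
    exact ih (fun i hi => hagree i (hi.trans n.lt_succ_self))
      (fun hn_even => cfTail_le_cfTail_of_eq hα hβ hn (hodd hn_even.add_one))
      fun hn_odd => cfTail_le_cfTail_of_eq hβ hα hn.symm (heven hn_odd.add_one)

/-- Only the first difference matters, and its effect is reversed at odd places because
`x ↦ d + 1 / x` is decreasing. -/
theorem cfTail_le_cfTail (hα : ∀ n, 0 < α n) (hβ : ∀ n, 0 < β n)
    (h : ∀ n, 0 ≤ n → (∀ i, 0 ≤ i → i < n → α (j + i) = β (k + i)) →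
      (Even n → α (j + n) ≤ β (k + n)) ∧ (Odd n → β (k + n) ≤ α (j + n))) :
    cfTail α j ≤ cfTail β k := by
  by_cases hdiff : ∃ n : ℕ, α (j + n) ≠ β (k + n)
  · classical
    obtain ⟨n, hne, hmin⟩ := Nat.findX hdiff
    have hagree (i : ℕ) (hi : i < n) : α (j + i) = β (k + i) := not_not.1 (hmin i hi)
    obtain ⟨heven, hodd⟩ := h n n.cast_nonneg fun i hi hin => by
      lift i to ℕ using hi
      exact hagree i (Nat.cast_lt.1 hin)
    refine cfTail_le_cfTail_of_agree hα hβ n hagree (fun hn => ?_) fun hn => ?_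
    · exact (cfTail_lt_of_lt hα hβ ((heven (by exact_mod_cast hn)).lt_of_ne hne)).le
    · exact (cfTail_lt_of_lt hβ hα ((hodd (by exact_mod_cast hn)).lt_of_ne hne.symm)).le
  · push Not at hdiff
    exact (cfTail_congr hdiff).le

/-! ### Words and bounds for complete quotients -/

/-- The word `w` occurs in `α` at position `k`. -/
def HasWordAt (α : ℤ → ℕ) (k : ℤ) : List ℕ → Prop
  | [] => True
  | d :: w => α k = d ∧ HasWordAt α (k + 1) w

theorem cfTail_eq_foldr_of_hasWordAt {w : List ℕ} (hw : HasWordAt α k w) (hα : ∀ n, 0 < α n) :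
    cfTail α k = w.foldr (fun (d : ℕ) (x : ℝ) => d + 1 / x) (cfTail α (k + w.length)) := by
  induction w generalizing k with
  | nil => simp only [List.foldr_nil, List.length_nil, Nat.cast_zero, add_zero]
  | cons d w ih =>
    obtain ⟨hd, hw⟩ : α k = d ∧ HasWordAt α (k + 1) w := hw
    rw [cfTail_eq hα, hd, ih hw, List.foldr_cons, List.length_cons, Nat.cast_succ,
      add_assoc, add_comm 1]

theorem cfTail_eq_of_hasWordAt_2111 (hα : ∀ n, 0 < α n) (hw : HasWordAt α k [2, 1, 1, 1]) :
    cfTail α k = (8 * cfTail α (k + 4) + 5) / (3 * cfTail α (k + 4) + 2) := by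
  have hpos := one_le_cfTail hα (k + 4)
  rw [cfTail_eq_foldr_of_hasWordAt hw hα]
  simp only [List.foldr_cons, List.foldr_nil, List.length_cons, List.length_nil, zero_add,
    Nat.reduceAdd, Nat.cast_ofNat, Nat.cast_one]
  field_simp
  ring

theorem cfTail_eq_of_hasWordAt_211111 (hα : ∀ n, 0 < α n)
    (hw : HasWordAt α k [2, 1, 1, 1, 1, 1]) :
    cfTail α k = (21 * cfTail α (k + 6) + 13) / (8 * cfTail α (k + 6) + 5) := by
  have hpos := one_le_cfTail hα (k + 6)
  rw [cfTail_eq_foldr_of_hasWordAt hw hα]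
  simp only [List.foldr_cons, List.foldr_nil, List.length_cons, List.length_nil, zero_add,
    Nat.reduceAdd, Nat.cast_ofNat, Nat.cast_one]
  field_simp
  ring

theorem cfTail_eq_of_hasWordAt_2212 (hα : ∀ n, 0 < α n) (hw : HasWordAt α k [2, 2, 1, 2]) :
    cfTail α k = (19 * cfTail α (k + 4) + 7) / (8 * cfTail α (k + 4) + 3) := by
  have hpos := one_le_cfTail hα (k + 4)
  rw [cfTail_eq_foldr_of_hasWordAt hw hα]
  simp only [List.foldr_cons, List.foldr_nil, List.length_cons, List.length_nil, zero_add,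
    Nat.reduceAdd, Nat.cast_ofNat, Nat.cast_one]
  field_simp
  ring

theorem cfTail_mem_Icc (hα : ∀ n, 0 < α n) {l u : ℝ} (hl : 0 < l)
    (h : cfTail α (k + 1) ∈ Icc l u) : cfTail α k ∈ Icc (α k + 1 / u) (α k + 1 / l) := by
  have hpos := hl.trans_le h.1
  rw [cfTail_eq hα]
  exact ⟨by gcongr; exact h.2, by gcongr; exact h.1⟩

theorem add_one_div_le_cfTail {N : ℕ} (hα : ∀ n, 0 < α n) (hN : ∀ n, α n ≤ N) (k : ℤ) :
    (α k + 1 / (N + 1) : ℝ) ≤ cfTail α k := by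
  have hle : cfTail α (k + 1) ≤ N + 1 :=
    (cfTail_le_add_one hα (k + 1)).trans (by gcongr; exact hN (k + 1))
  exact (cfTail_mem_Icc hα one_pos ⟨one_le_cfTail hα (k + 1), hle⟩).1

theorem cfTail_mem_Icc_of_le_two (hα : ∀ n, 0 < α n) (htwo : ∀ n, α n ≤ 2) (k : ℤ) :
    cfTail α k ∈ Icc (α k + 1 / 3 : ℝ) (α k + 3 / 4) := by
  have hlower (n : ℤ) : (α n + 1 / 3 : ℝ) ≤ cfTail α n := by
    convert add_one_div_le_cfTail hα htwo n using 3
    norm_num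
  have hnext : cfTail α (k + 1) ∈ Icc (4 / 3 : ℝ) 3 := by
    have hone : (1 : ℝ) ≤ α (k + 1) := by exact_mod_cast hα (k + 1)
    have hle : (α (k + 1) : ℝ) ≤ 2 := by exact_mod_cast htwo (k + 1)
    exact ⟨by linarith [hlower (k + 1)], by linarith [cfTail_le_add_one hα (k + 1)]⟩
  refine ⟨hlower k, (cfTail_mem_Icc hα (by norm_num) hnext).2.trans_eq ?_⟩
  norm_num

theorem cfTail_mem_Icc_of_eq_one (hα : ∀ n, 0 < α n) (htwo : ∀ n, α n ≤ 2) (hk : α k = 1) :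
    cfTail α k ∈ Icc (4 / 3 : ℝ) (7 / 4) := by
  convert cfTail_mem_Icc_of_le_two hα htwo k using 2 <;> norm_num [hk]

theorem cfTail_mem_Icc_of_eq_two (hα : ∀ n, 0 < α n) (htwo : ∀ n, α n ≤ 2) (hk : α k = 2) :
    cfTail α k ∈ Icc (7 / 3 : ℝ) (11 / 4) := by
  convert cfTail_mem_Icc_of_le_two hα htwo k using 2 <;> norm_num [hk]

/-! ### Bounds for `λ_k` -/

theorem cast_le_lambdaVal (hα : ∀ n, 0 < α n) (k : ℤ) : α k ≤ lambdaVal α k := by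
  have hback := cfTail_eq (reversal_pos hα) (-k)
  have hback_pos := one_le_cfTail (reversal_pos hα) (-k + 1)
  have hfwd_pos := one_le_cfTail hα (k + 1)
  rw [reversal_neg] at hback
  rw [lambdaVal_eq hα, cfTail_eq hα, hback]
  have h₁ : 0 ≤ 1 / cfTail α (k + 1) := by positivity
  have h₂ : 0 ≤ 1 / cfTail (reversal α) (-k + 1) := by positivity
  linarith

theorem le_two_of_lambdaVal_lt (hα : ∀ n, 0 < α n) (h : ∀ k, lambdaVal α k < 7 / 2) (k : ℤ) :
    α k ≤ 2 := by
  have hthree (n : ℤ) : α n ≤ 3 := by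
    have hlt : (α n : ℝ) < 4 := by linarith [cast_le_lambdaVal hα n, h n]
    exact Nat.lt_succ_iff.1 (by exact_mod_cast hlt)
  have hfwd := add_one_div_le_cfTail hα hthree k
  have hback := add_one_div_le_cfTail (reversal_pos hα) (reversal_le hthree) (-k)
  have hk := h k
  rw [lambdaVal_eq hα] at hk
  rw [reversal_neg] at hback
  push_cast at hfwd hback
  have hlt : (α k : ℝ) < 3 := by linarith
  exact Nat.lt_succ_iff.1 (by exact_mod_cast hlt)

theorem lambdaVal_le_of_eq_one (hα : ∀ n, 0 < α n) (htwo : ∀ n, α n ≤ 2) (hk : α k = 1) :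
    lambdaVal α k ≤ 5 / 2 := by
  have hfwd := cfTail_mem_Icc_of_eq_one hα htwo hk
  have hback := cfTail_mem_Icc_of_eq_one (reversal_pos hα) (reversal_le htwo)
    ((reversal_neg α k).trans hk)
  rw [lambdaVal_eq hα, hk]
  norm_num
  linarith [hfwd.2, hback.2]

theorem lambdaVal_le_of_hasWordAt_22 (hα : ∀ n, 0 < α n) (htwo : ∀ n, α n ≤ 2)
    (hw : HasWordAt α k [2, 2]) : lambdaVal α k ≤ 16 / 5 := by
  obtain ⟨h₀, h₁, -⟩ := hw
  have hfwd := (cfTail_mem_Icc hα (by norm_num) (cfTail_mem_Icc_of_eq_two hα htwo h₁)).2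
  have hback := (cfTail_mem_Icc_of_eq_two (reversal_pos hα) (reversal_le htwo)
    ((reversal_neg α k).trans h₀)).2
  rw [lambdaVal_eq hα, h₀]
  norm_num [h₀] at hfwd ⊢
  linarith

theorem lambdaVal_le_of_eq_two_of_neighbor_eq_two (hα : ∀ n, 0 < α n) (htwo : ∀ n, α n ≤ 2)
    (hk : α k = 2) (h : α (k + 1) = 2 ∨ α (k - 1) = 2) : lambdaVal α k ≤ 16 / 5 := by
  rcases h with h | h
  · exact lambdaVal_le_of_hasWordAt_22 hα htwo ⟨hk, h, trivial⟩
  · have hw : HasWordAt (reversal α) (-k) [2, 2] :=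
      ⟨(reversal_neg α k).trans hk, by rwa [reversal, neg_add, neg_neg, ← sub_eq_add_neg], trivial⟩
    have := lambdaVal_le_of_hasWordAt_22 (reversal_pos hα) (reversal_le htwo) hw
    rwa [lambdaVal_reversal hα, neg_neg] at this

theorem le_lambdaVal_of_hasWordAt_1212 (hα : ∀ n, 0 < α n) (htwo : ∀ n, α n ≤ 2)
    (hw : HasWordAt α k [1, 2, 1, 2]) : 3.27 ≤ lambdaVal α (k + 1) := by
  obtain ⟨h₀, h₁, h₂, h₃, -⟩ := hw
  have hfwd₂ := cfTail_mem_Icc hα (by norm_num) (cfTail_mem_Icc_of_eq_two hα htwo h₃)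
  have hfwd := (cfTail_mem_Icc hα (by norm_num [h₂]) hfwd₂).1
  have hprev : reversal α (-(k + 1) + 1) = 1 := by
    rw [reversal, show -(-(k + 1) + 1) = k by ring, h₀]
  have hback := (cfTail_mem_Icc (reversal_pos hα) (by norm_num)
    (cfTail_mem_Icc_of_eq_one (reversal_pos hα) (reversal_le htwo) hprev)).1
  rw [reversal_neg, h₁] at hback
  rw [lambdaVal_eq hα, h₁]
  norm_num [h₁, h₂] at hfwd hback ⊢
  linarith

end

/-! ### The sequences realising the ends of the gap -/

/-- The bi-infinite periodic sequence with period `2111112111`, whose Markov value is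
`√66045 / 79`; index `0` carries the `2` followed by `11111`. -/
def gapStartSeq (n : ℤ) : ℕ := if n % 10 = 0 ∨ n % 10 = 6 then 2 else 1

/-- The symmetric sequence `… 2122 2122 111 2 111 2212 2212 …`, whose Markov value
`(190 + 4√30) / 65` is attained at the central digit, which has index `0`. -/
def gapEndSeq (n : ℤ) : ℕ := if n % 4 = 2 ∨ n.natAbs = 1 ∨ n.natAbs = 3 then 1 else 2

theorem gapStartSeq_pos (n : ℤ) : 0 < gapStartSeq n := by
  unfold gapStartSeq
  split_ifs <;> decide

theorem gapStartSeq_le_two (n : ℤ) : gapStartSeq n ≤ 2 := by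
  unfold gapStartSeq
  split_ifs <;> decide

theorem gapStartSeq_eq_one_iff {n : ℤ} : gapStartSeq n = 1 ↔ n % 10 ≠ 0 ∧ n % 10 ≠ 6 := by
  grind [gapStartSeq]

theorem gapStartSeq_eq_two_iff {n : ℤ} : gapStartSeq n = 2 ↔ n % 10 = 0 ∨ n % 10 = 6 := by
  grind [gapStartSeq]

theorem gapEndSeq_pos (n : ℤ) : 0 < gapEndSeq n := by
  unfold gapEndSeq
  split_ifs <;> decide

theorem gapEndSeq_le_two (n : ℤ) : gapEndSeq n ≤ 2 := by
  unfold gapEndSeq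
  split_ifs <;> decide

theorem gapEndSeq_eq_one_iff {n : ℤ} (hn : 4 ≤ n) : gapEndSeq n = 1 ↔ n % 4 = 2 := by
  grind [gapEndSeq]

theorem gapEndSeq_eq_two_iff {n : ℤ} (hn : 4 ≤ n) : gapEndSeq n = 2 ↔ n % 4 ≠ 2 := by
  grind [gapEndSeq]

theorem sixteen_fifths_lt_gapStart : 16 / 5 < √66045 / 79 := by
  have : 253 < √66045 := Real.lt_sqrt_of_sq_lt (by norm_num)
  linarith

theorem gapEnd_mem_Ioo : (190 + 4 * √30) / 65 ∈ Ioo (16 / 5) 3.27 := by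
  have hlo : 5 < √30 := Real.lt_sqrt_of_sq_lt (by norm_num)
  have hhi : √30 < 5.5 := (Real.sqrt_lt' (by norm_num)).2 (by norm_num)
  constructor <;> linarith

theorem mem_markovSpectrum_of_isGreatest {α : ℤ → ℕ} {c : ℝ} (hα : ∀ n, 0 < α n)
    (h : IsGreatest (range (lambdaVal α)) c) : c ∈ markovSpectrum :=
  ⟨α, hα, h.bddAbove, h.csSup_eq⟩

theorem cfTail_gapStartSeq_zero_add_cfTail_six :
    cfTail gapStartSeq 0 + cfTail gapStartSeq 6 = √66045 / 79 + 2 := by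
  have hP := cfTail_eq_of_hasWordAt_211111 (k := 0) gapStartSeq_pos
    (by simp [HasWordAt, gapStartSeq])
  have hQ := cfTail_eq_of_hasWordAt_2111 (k := 6) gapStartSeq_pos
    (by simp [HasWordAt, gapStartSeq])
  have hperiod : cfTail gapStartSeq 10 = cfTail gapStartSeq 0 :=
    cfTail_congr fun n => by grind [gapStartSeq]
  norm_num only [hperiod] at hP hQ
  have hP_pos := one_le_cfTail gapStartSeq_pos 0
  have hQ_pos := one_le_cfTail gapStartSeq_pos 6
  generalize cfTail gapStartSeq 0 = P at *
  generalize cfTail gapStartSeq 6 = Q at *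
  rw [eq_div_iff (by positivity)] at hP hQ
  have hQP : Q = P + 1 / 79 := by linarith
  have hquad : 79 * P ^ 2 - 157 * P - 131 = 0 := by
    rw [hQP] at hQ
    linarith
  have hroot : √66045 = 158 * P - 157 := by
    rw [Real.sqrt_eq_iff_mul_self_eq (by norm_num) (by linarith)]
    linarith
  rw [hQP, hroot]
  ring

theorem lambdaVal_gapStartSeq {k : ℤ} (hk : gapStartSeq k = 2) :
    lambdaVal gapStartSeq k = √66045 / 79 := by
  rw [lambdaVal_eq gapStartSeq_pos, hk]
  rcases gapStartSeq_eq_two_iff.1 hk with hk | hk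
  · have hfwd : cfTail gapStartSeq k = cfTail gapStartSeq 0 :=
      cfTail_congr fun n => by grind [gapStartSeq]
    have hback : cfTail (reversal gapStartSeq) (-k) = cfTail gapStartSeq 6 :=
      cfTail_congr fun n => by grind [gapStartSeq, reversal]
    rw [hfwd, hback, cfTail_gapStartSeq_zero_add_cfTail_six]
    norm_num
  · have hfwd : cfTail gapStartSeq k = cfTail gapStartSeq 6 :=
      cfTail_congr fun n => by grind [gapStartSeq]
    have hback : cfTail (reversal gapStartSeq) (-k) = cfTail gapStartSeq 0 :=
      cfTail_congr fun n => by grind [gapStartSeq, reversal]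
    rw [hfwd, hback, add_comm, cfTail_gapStartSeq_zero_add_cfTail_six]
    norm_num

theorem reversal_gapEndSeq : reversal gapEndSeq = gapEndSeq := by
  funext n
  grind [reversal, gapEndSeq]

theorem cfTail_gapEndSeq_four : cfTail gapEndSeq 4 = 1 + √30 / 4 := by
  have h := cfTail_eq_of_hasWordAt_2212 (k := 4) gapEndSeq_pos (by simp [HasWordAt, gapEndSeq])
  have hperiod : cfTail gapEndSeq 8 = cfTail gapEndSeq 4 :=
    cfTail_congr fun n => by grind [gapEndSeq]
  norm_num only [hperiod] at h
  have hpos := one_le_cfTail gapEndSeq_pos 4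
  have hroot : √30 = 4 * (cfTail gapEndSeq 4 - 1) := by
    rw [Real.sqrt_eq_iff_mul_self_eq (by norm_num) (by linarith)]
    rw [eq_div_iff (by positivity)] at h
    linarith
  linarith

theorem lambdaVal_gapEndSeq_zero : lambdaVal gapEndSeq 0 = (190 + 4 * √30) / 65 := by
  have h := cfTail_eq_of_hasWordAt_2111 (k := 0) gapEndSeq_pos (by simp [HasWordAt, gapEndSeq])
  rw [zero_add, cfTail_gapEndSeq_four] at h
  rw [lambdaVal_eq gapEndSeq_pos, reversal_gapEndSeq, neg_zero, h, show gapEndSeq 0 = 2 by decide]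
  have hsq := Real.sq_sqrt (show (0 : ℝ) ≤ 30 by norm_num)
  field_simp
  linear_combination (-12) * hsq

theorem gapStart_mem_markovSpectrum : √66045 / 79 ∈ markovSpectrum := by
  refine mem_markovSpectrum_of_isGreatest gapStartSeq_pos
    ⟨⟨0, lambdaVal_gapStartSeq (by decide)⟩, ?_⟩
  rintro _ ⟨k, rfl⟩
  obtain hk | hk : gapStartSeq k = 1 ∨ gapStartSeq k = 2 := by grind [gapStartSeq]
  · linarith [lambdaVal_le_of_eq_one gapStartSeq_pos gapStartSeq_le_two hk,
      sixteen_fifths_lt_gapStart]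
  · exact (lambdaVal_gapStartSeq hk).le

theorem gapEnd_mem_markovSpectrum : (190 + 4 * √30) / 65 ∈ markovSpectrum := by
  refine mem_markovSpectrum_of_isGreatest gapEndSeq_pos ⟨⟨0, lambdaVal_gapEndSeq_zero⟩, ?_⟩
  rintro _ ⟨k, rfl⟩
  have hgap := gapEnd_mem_Ioo.1
  obtain rfl | hk | ⟨hk, hneighbor⟩ : k = 0 ∨ gapEndSeq k = 1 ∨
      gapEndSeq k = 2 ∧ (gapEndSeq (k + 1) = 2 ∨ gapEndSeq (k - 1) = 2) := by grind [gapEndSeq]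
  · exact lambdaVal_gapEndSeq_zero.le
  · linarith [lambdaVal_le_of_eq_one gapEndSeq_pos gapEndSeq_le_two hk]
  · linarith [lambdaVal_le_of_eq_two_of_neighbor_eq_two gapEndSeq_pos gapEndSeq_le_two hk hneighbor]

theorem eq_one_and_eq_two_of_lt {a b : ℕ} (ha : 0 < a) (hb : b ≤ 2) (h : a < b) :
    a = 1 ∧ b = 2 := by lia

theorem hasWordAt_121_gapStartSeq {n : ℤ} (h : n % 10 = 5 ∨ n % 10 = 9) :
    HasWordAt gapStartSeq n [1, 2, 1] := by
  simp only [HasWordAt, gapStartSeq_eq_one_iff, gapStartSeq_eq_two_iff, and_true]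
  omega

theorem hasWordAt_21112111_gapStartSeq {n : ℤ} (h : n % 10 = 6) :
    HasWordAt gapStartSeq n [2, 1, 1, 1, 2, 1, 1, 1] := by
  simp only [HasWordAt, gapStartSeq_eq_one_iff, gapStartSeq_eq_two_iff, and_true]
  omega

theorem hasWordAt_212_gapEndSeq {n : ℤ} (hn : 4 ≤ n) (h : n % 4 = 1) :
    HasWordAt gapEndSeq n [2, 1, 2] :=
  ⟨(gapEndSeq_eq_two_iff (by omega)).2 (by omega), (gapEndSeq_eq_one_iff (by omega)).2 (by omega),
    (gapEndSeq_eq_two_iff (by omega)).2 (by omega), trivial⟩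

section

variable {α : ℤ → ℕ} {k : ℤ}

theorem hasWordAt_append_singleton_of_agree {β : ℤ → ℕ} {w : List ℕ} {d : ℕ} {j n : ℤ}
    (hagree : ∀ i, n - w.length ≤ i → i < n → α (k + i) = β (j + i))
    (hw : HasWordAt β (j + n - w.length) w) (hd : α (k + n) = d) :
    HasWordAt α (k + n - w.length) (w ++ [d]) := by
  induction w with
  | nil => exact ⟨by simpa only [List.length_nil, Nat.cast_zero, sub_zero], trivial⟩
  | cons c w ih =>
    obtain ⟨hc, hw⟩ := hw
    simp only [List.length_cons, Nat.cast_succ] at hagree hc hw ⊢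
    have hshift (m : ℤ) : m - (w.length + 1) + 1 = m - w.length := by ring
    refine ⟨?_, ?_⟩
    · rw [add_sub_assoc, hagree _ le_rfl (by linarith), ← add_sub_assoc, hc]
    · rw [hshift] at hw ⊢
      exact ih (fun i hi => hagree i (by linarith)) hw

/-- At the first difference, a larger digit of `α` completes `1212` or, from position `8` on,
`211121112`; `hshort` covers the earlier positions. -/
theorem cfTail_le_cfTail_gapStartSeq {l : ℤ} (hα : ∀ n, 0 < α n) (htwo : ∀ n, α n ≤ 2)
    (h1212 : ∀ n, ¬HasWordAt α n [1, 2, 1, 2])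
    (h211121112 : ∀ n, ¬HasWordAt α n [2, 1, 1, 1, 2, 1, 1, 1, 2]) (hl : gapStartSeq l = 2)
    (hprev : α (k - 1) = gapStartSeq (l - 1))
    (hshort : ∀ n, 0 ≤ n → n < 8 → (l + n) % 10 = 4 →
      (∀ i, 0 ≤ i → i < n → α (k + i) = gapStartSeq (l + i)) → α (k + n) ≠ 2) :
    cfTail α k ≤ cfTail gapStartSeq l := by
  rw [gapStartSeq_eq_two_iff] at hl
  refine cfTail_le_cfTail hα gapStartSeq_pos fun n hn hagree => ⟨fun heven => ?_, fun hodd => ?_⟩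
  · by_contra! hlt
    obtain ⟨hβ, hd⟩ := eq_one_and_eq_two_of_lt (gapStartSeq_pos _) (htwo _) hlt
    have hagree_prev (i : ℤ) (hi : -1 ≤ i) (hin : i < n) : α (k + i) = gapStartSeq (l + i) := by
      obtain rfl | hi := hi.eq_or_lt
      · exact hprev
      · exact hagree i (by lia) hin
    rw [gapStartSeq_eq_one_iff] at hβ
    rw [Int.even_iff] at heven
    obtain hmod | hmod : ((l + n) % 10 = 2 ∨ (l + n) % 10 = 8) ∨ (l + n) % 10 = 4 := by omega
    · refine h1212 _ (hasWordAt_append_singleton_of_agree (w := [1, 2, 1])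
        (fun i hi => hagree_prev i ?_) (hasWordAt_121_gapStartSeq ?_) hd) <;>
      simp only [List.length_cons, List.length_nil] at * <;> omega
    · have hn_ge : 8 ≤ n := not_lt.1 fun hn_lt => hshort n hn hn_lt hmod hagree hd
      refine h211121112 _ (hasWordAt_append_singleton_of_agree (w := [2, 1, 1, 1, 2, 1, 1, 1])
        (fun i hi => hagree_prev i ?_) (hasWordAt_21112111_gapStartSeq ?_) hd) <;>
      simp only [List.length_cons, List.length_nil] at * <;> omega
  · rw [Int.odd_iff] at hodd
    rw [gapStartSeq_eq_one_iff.2 (by omega)]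
    exact hα _

theorem cfTail_gapEndSeq_zero_le (hα : ∀ n, 0 < α n) (htwo : ∀ n, α n ≤ 2)
    (h2121 : ∀ n, ¬HasWordAt α n [2, 1, 2, 1]) (hw : HasWordAt α k [2, 1, 1, 1, 2]) :
    cfTail gapEndSeq 0 ≤ cfTail α k := by
  have hprefix (i : ℤ) (hi : 0 ≤ i) (hi' : i ≤ 4) : gapEndSeq (0 + i) = α (k + i) := by
    simp only [HasWordAt, add_assoc, Int.reduceAdd, and_true] at hw
    interval_cases i <;> simp [gapEndSeq, hw]
  refine cfTail_le_cfTail gapEndSeq_pos hα fun n hn hagree => ?_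
  obtain hn_le | hn_gt := le_or_gt n 4
  · exact ⟨fun _ => (hprefix n hn hn_le).le, fun _ => (hprefix n hn hn_le).ge⟩
  refine ⟨fun heven => ?_, fun hodd => ?_⟩
  · by_contra! hlt
    obtain ⟨hd, hβ⟩ := eq_one_and_eq_two_of_lt (hα _) (gapEndSeq_le_two _) hlt
    rw [gapEndSeq_eq_two_iff (by omega)] at hβ
    rw [Int.even_iff] at heven
    refine h2121 _ (hasWordAt_append_singleton_of_agree (w := [2, 1, 2])
        (fun i hi hin => (hagree i ?_ hin).symm) (hasWordAt_212_gapEndSeq ?_ ?_) hd) <;>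
      simp only [List.length_cons, List.length_nil] at * <;> omega
  · rw [Int.odd_iff] at hodd
    rw [(gapEndSeq_eq_two_iff (by omega)).2 (by omega)]
    exact htwo _

end

/-! ### The gap -/

/-- Sequences of positive integers with all values `λ_k` below the right end of the gap. -/
structure IsBelowGapEnd (α : ℤ → ℕ) : Prop where
  pos : ∀ k, 0 < α k
  lambdaVal_lt : ∀ k, lambdaVal α k < (190 + 4 * √30) / 65

namespace IsBelowGapEnd

variable {α : ℤ → ℕ}

theorem le_two (h : IsBelowGapEnd α) : ∀ k, α k ≤ 2 :=
  le_two_of_lambdaVal_lt h.pos fun k =>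
    (h.lambdaVal_lt k).trans (gapEnd_mem_Ioo.2.trans (by norm_num))

theorem reverse (h : IsBelowGapEnd α) : IsBelowGapEnd (reversal α) where
  pos := reversal_pos h.pos
  lambdaVal_lt k := (lambdaVal_reversal h.pos k).trans_lt (h.lambdaVal_lt (-k))

theorem not_hasWordAt_1212 (h : IsBelowGapEnd α) (k : ℤ) : ¬HasWordAt α k [1, 2, 1, 2] := by
  intro hw
  linarith [le_lambdaVal_of_hasWordAt_1212 h.pos h.le_two hw, h.lambdaVal_lt (k + 1),
    gapEnd_mem_Ioo.2]

theorem not_hasWordAt_2121 (h : IsBelowGapEnd α) (k : ℤ) : ¬HasWordAt α k [2, 1, 2, 1] := by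
  intro hw
  apply h.reverse.not_hasWordAt_1212 (-k - 3)
  grind [HasWordAt, reversal]

theorem not_hasWordAt_21112_and_reversal (h : IsBelowGapEnd α) (k : ℤ) :
    ¬(HasWordAt α k [2, 1, 1, 1, 2] ∧ HasWordAt (reversal α) (-k) [2, 1, 1, 1, 2]) := by
  rintro ⟨hfwd, hback⟩
  have hfwd_le := cfTail_gapEndSeq_zero_le h.pos h.le_two h.not_hasWordAt_2121 hfwd
  have hback_le := cfTail_gapEndSeq_zero_le h.reverse.pos h.reverse.le_two
    h.reverse.not_hasWordAt_2121 hback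
  have hlt := h.lambdaVal_lt k
  rw [← lambdaVal_gapEndSeq_zero, lambdaVal_eq h.pos, lambdaVal_eq gapEndSeq_pos,
    reversal_gapEndSeq, neg_zero, hfwd.1, show gapEndSeq 0 = 2 by decide] at hlt
  linarith

theorem not_hasWordAt_211121112 (h : IsBelowGapEnd α) (k : ℤ) :
    ¬HasWordAt α k [2, 1, 1, 1, 2, 1, 1, 1, 2] := by
  intro hw
  apply h.not_hasWordAt_21112_and_reversal (k + 4)
  grind [HasWordAt, reversal]

theorem cfTail_le_cfTail_gapStartSeq_six (h : IsBelowGapEnd α) {k : ℤ} (hprev : α (k - 1) = 1) :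
    cfTail α k ≤ cfTail gapStartSeq 6 :=
  cfTail_le_cfTail_gapStartSeq h.pos h.le_two h.not_hasWordAt_1212 h.not_hasWordAt_211121112
    (by decide) hprev fun n _ _ _ => by omega

theorem cfTail_le_cfTail_gapStartSeq_zero (h : IsBelowGapEnd α) {k : ℤ} (hprev : α (k - 1) = 1)
    (hw : ¬HasWordAt α k [2, 1, 1, 1, 2]) : cfTail α k ≤ cfTail gapStartSeq 0 := by
  refine cfTail_le_cfTail_gapStartSeq h.pos h.le_two h.not_hasWordAt_1212
    h.not_hasWordAt_211121112 (by decide) hprev fun n _ _ _ hagree hd => hw ?_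
  obtain rfl : n = 4 := by omega
  simpa using hasWordAt_append_singleton_of_agree (w := [2, 1, 1, 1])
    (fun i hi => hagree i (by simpa using hi)) (by simp [HasWordAt, gapStartSeq]) hd

theorem lambdaVal_le_of_not_hasWordAt_21112 (h : IsBelowGapEnd α) {k : ℤ} (hk : α k = 2)
    (hprev : α (k - 1) = 1) (hnext : α (k + 1) = 1) (hw : ¬HasWordAt α k [2, 1, 1, 1, 2]) :
    lambdaVal α k ≤ √66045 / 79 := by
  have hfwd := h.cfTail_le_cfTail_gapStartSeq_zero hprev hw
  have hback := h.reverse.cfTail_le_cfTail_gapStartSeq_six (k := -k) (by grind [reversal])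
  rw [lambdaVal_eq h.pos, hk]
  push_cast
  linarith [cfTail_gapStartSeq_zero_add_cfTail_six]

theorem lambdaVal_le (h : IsBelowGapEnd α) (k : ℤ) : lambdaVal α k ≤ √66045 / 79 := by
  have hgap := sixteen_fifths_lt_gapStart
  obtain hk | hk : α k = 1 ∨ α k = 2 := by grind [h.pos k, h.le_two k]
  · linarith [lambdaVal_le_of_eq_one h.pos h.le_two hk]
  by_cases hneighbor : α (k + 1) = 2 ∨ α (k - 1) = 2
  · linarith [lambdaVal_le_of_eq_two_of_neighbor_eq_two h.pos h.le_two hk hneighbor]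
  have hnext : α (k + 1) = 1 := by grind [h.pos (k + 1), h.le_two (k + 1)]
  have hprev : α (k - 1) = 1 := by grind [h.pos (k - 1), h.le_two (k - 1)]
  by_cases hw : HasWordAt α k [2, 1, 1, 1, 2]
  · have hback := h.reverse.lambdaVal_le_of_not_hasWordAt_21112 (k := -k)
      (by grind [reversal]) (by grind [reversal]) (by grind [reversal])
      fun hw' => h.not_hasWordAt_21112_and_reversal k ⟨hw, hw'⟩
    rwa [lambdaVal_reversal h.pos, neg_neg] at hback
  · exact h.lambdaVal_le_of_not_hasWordAt_21112 hk hprev hnext hw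

end IsBelowGapEnd

/-- The open interval is a gap of the Markov spectrum: the spectrum misses the
open interval, while both endpoints belong to it. -/
theorem markov_gap_11 :
    markovSpectrum ∩ Ioo (Real.sqrt 66045 / 79) ((190 + 4 * Real.sqrt 30) / 65) = ∅ ∧
    (Real.sqrt 66045 / 79) ∈ markovSpectrum ∧ ((190 + 4 * Real.sqrt 30) / 65) ∈ markovSpectrum := by
  refine ⟨eq_empty_iff_forall_notMem.2 ?_, gapStart_mem_markovSpectrum, gapEnd_mem_markovSpectrum⟩
  rintro _ ⟨⟨α, hα, hbdd, rfl⟩, hlo, hhi⟩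
  have hbelow : IsBelowGapEnd α := ⟨hα, fun k => (le_ciSup hbdd k).trans_lt hhi⟩
  exact hlo.not_ge (ciSup_le hbelow.lambdaVal_le)
end
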